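/- arXiv:2406.14771 — 10 statements merged into one kernel-verified Lean document; each statement's English description precedes it below -/
import Mathlib

section
/- Let X be a nonempty Tychonoff (completely regular T1) space with no isolated points which is strongly n-homogeneous for every positive integer n. Then the composition map (f, g) ↦ f ∘ g from Hom_p(X) × Hom_p(X) to Hom_p(X) is not continuous. -/
open Topology

/-- The topology of pointwise convergence on the group of self-homeomorphisms of `X`,
induced by the inclusion of `Hom(X)` into the product space `X → X`. -/
def homPTop (X : Type*) [TopologicalSpace X] : TopologicalSpace (X ≃ₜ X) :=
  TopologicalSpace.induced (fun f => (f : X → X)) inferInstance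

/-- A space `X` is strongly `n`-homogeneous if for any two `n`-sized subsets `A`, `B` of `X`
and any bijection `h : A → B` there is a self-homeomorphism of `X` restricting to `h` on `A`. -/
def StronglyNHomogeneous (X : Type*) [TopologicalSpace X] (n : ℕ) : Prop :=
  ∀ A B : Set X, A.ncard = n → B.ncard = n → ∀ h : X → X, Set.BijOn h A B →
    ∃ f : X ≃ₜ X, Set.EqOn (⇑f) h A

/-!
A neighbourhood of `f₀` in `Hom_p(X)` constrains only the values on a finite set `I`, and only
up to open (hence infinite) sets; so by homogeneity some homeomorphism in it takes any prescribed
value `z` at any prescribed `y ∉ I`. On the other hand the values `g x` of the homeomorphisms `g`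
near `g₀` fill a neighbourhood of `g₀ x`, so `g x` can be moved off `I`, and then `f (g x)` is
arbitrary however close `f` and `g` are to `f₀` and `g₀`.
-/

open Filter Function Set

section InjectiveSelection

variable {ι α : Type*} {s : Set ι} {h : ι → α} {a : ι} {b : α}

theorem eqOn_update_of_notMem [DecidableEq ι] (ha : a ∉ s) : EqOn (update h a b) h s :=
  fun _ hi => update_of_ne (ne_of_mem_of_not_mem hi ha) b h

theorem injOn_update_insert [DecidableEq ι] (hinj : InjOn h s) (ha : a ∉ s) (hb : b ∉ h '' s) :
    InjOn (update h a b) (insert a s) := by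
  have heq : EqOn (update h a b) h s := eqOn_update_of_notMem ha
  rw [injOn_insert ha, heq.image_eq, update_self]
  exact ⟨hinj.congr heq.symm, hb⟩

theorem exists_injOn_forall_mem_of_infinite [Nonempty α] (hs : s.Finite) {u : ι → Set α}
    (hu : ∀ i ∈ s, (u i).Infinite) : ∃ h : ι → α, InjOn h s ∧ ∀ i ∈ s, h i ∈ u i := by
  classical
  induction s, hs using Set.Finite.induction_on with
  | empty => exact ⟨fun _ => Classical.arbitrary α, injOn_empty _, fun _ => False.elim⟩
  | @insert a t hat ht ih =>
    obtain ⟨h, hinj, hmem⟩ := ih fun i hi => hu i (mem_insert_of_mem a hi)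
    obtain ⟨b, hbu, hb⟩ := (hu a (mem_insert a t)).exists_notMem_finite (ht.image h)
    refine ⟨update h a b, injOn_update_insert hinj hat hb, forall_mem_insert.2 ⟨?_, ?_⟩⟩
    · rwa [update_self]
    · intro i hi
      rw [eqOn_update_of_notMem hat hi]
      exact hmem i hi

end InjectiveSelection

theorem perfectSpace_of_forall_not_isOpen_singleton {X : Type*} [TopologicalSpace X]
    (hiso : ∀ x : X, ¬ IsOpen ({x} : Set X)) : PerfectSpace X :=
  perfectSpace_iff_forall_not_isolated.2 fun x =>
    ⟨fun hbot => hiso x ((isOpen_singleton_iff_punctured_nhds x).2 hbot)⟩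

section StrongHomogeneity

variable {X : Type*} [TopologicalSpace X]

theorem exists_homeomorph_eqOn_of_injOn (hhom : ∀ n : ℕ, 0 < n → StronglyNHomogeneous X n)
    {s : Set X} (hs : s.Finite) {h : X → X} (hinj : InjOn h s) : ∃ f : X ≃ₜ X, EqOn f h s := by
  obtain rfl | hne := s.eq_empty_or_nonempty
  · exact ⟨Homeomorph.refl X, eqOn_empty _ _⟩
  · exact hhom s.ncard ((ncard_pos hs).2 hne) s (h '' s) rfl hinj.ncard_image h hinj.bijOn_image

theorem exists_homeomorph_apply_eq_and_forall_mem
    (hhom : ∀ n : ℕ, 0 < n → StronglyNHomogeneous X n) {s : Set X} (hs : s.Finite)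
    {u : X → Set X} (hu : ∀ x ∈ s, (u x).Infinite) {y : X} (hy : y ∉ s) (z : X) :
    ∃ f : X ≃ₜ X, f y = z ∧ ∀ x ∈ s, f x ∈ u x := by
  classical
  have : Nonempty X := ⟨z⟩
  obtain ⟨h, hinj, hmem⟩ := exists_injOn_forall_mem_of_infinite hs
    fun x hx => (hu x hx).sdiff (finite_singleton z)
  have hz : z ∉ h '' s := fun ⟨x, hx, hxz⟩ => (hmem x hx).2 hxz
  obtain ⟨f, hf⟩ := exists_homeomorph_eqOn_of_injOn hhom (hs.insert y)
    (injOn_update_insert hinj hy hz)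
  refine ⟨f, ?_, fun x hx => ?_⟩
  · rw [hf (mem_insert y s), update_self]
  · rw [hf (mem_insert_of_mem y hx), eqOn_update_of_notMem hy hx]
    exact (hmem x hx).1

end StrongHomogeneity

section PointwiseConvergence

variable {X : Type*} [TopologicalSpace X]

attribute [local instance] homPTop

theorem continuous_homPTop_eval (x : X) : Continuous fun f : X ≃ₜ X => f x :=
  (continuous_apply x).comp continuous_induced_dom

theorem exists_finite_forall_mem_of_mem_nhds_homPTop {f : X ≃ₜ X} {S : Set (X ≃ₜ X)}
    (hS : S ∈ 𝓝 f) :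
    ∃ I : Set X, I.Finite ∧ ∃ u : X → Set X, (∀ x, u x ∈ 𝓝 (f x)) ∧
      ∀ g : X ≃ₜ X, (∀ x ∈ I, g x ∈ u x) → g ∈ S := by
  obtain ⟨T, hT, hTS⟩ := (mem_nhds_induced _ f S).1 hS
  rw [nhds_pi] at hT
  obtain ⟨I, hI, u, hu, huT⟩ := Filter.mem_pi.1 hT
  exact ⟨I, hI, u, hu, fun g hg => hTS (huT hg)⟩

variable [T1Space X] [PerfectSpace X] {f : X ≃ₜ X} {S : Set (X ≃ₜ X)}

theorem eventually_cofinite_forall_exists_apply_eq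
    (hhom : ∀ n : ℕ, 0 < n → StronglyNHomogeneous X n) (hS : S ∈ 𝓝 f) :
    ∀ᶠ y in cofinite, ∀ z, ∃ g ∈ S, g y = z := by
  obtain ⟨I, hI, u, hu, hIS⟩ := exists_finite_forall_mem_of_mem_nhds_homPTop hS
  filter_upwards [hI.compl_mem_cofinite] with y hy z
  obtain ⟨g, hgy, hg⟩ := exists_homeomorph_apply_eq_and_forall_mem hhom hI
    (fun x _ => infinite_of_mem_nhds (f x) (hu x)) hy z
  exact ⟨g, hIS g hg, hgy⟩

theorem eventually_nhds_exists_apply_eq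
    (hhom : ∀ n : ℕ, 0 < n → StronglyNHomogeneous X n) (hS : S ∈ 𝓝 f) (x : X) :
    ∀ᶠ y in 𝓝 (f x), ∃ g ∈ S, g x = y := by
  obtain ⟨I, hI, u, hu, hIS⟩ := exists_finite_forall_mem_of_mem_nhds_homPTop hS
  filter_upwards [hu x] with y hy
  obtain ⟨g, hgx, hg⟩ := exists_homeomorph_apply_eq_and_forall_mem hhom (hI.sdiff (t := {x}))
    (fun w _ => infinite_of_mem_nhds (f w) (hu w)) (fun hx => hx.2 rfl) y
  refine ⟨g, hIS g fun w hw => ?_, hgx⟩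
  obtain rfl | hwx := eq_or_ne w x
  · rwa [hgx]
  · exact hg w ⟨hw, hwx⟩

theorem composition_not_continuous_of_stronglyNHomogeneous_general [Nonempty X]
    (hhom : ∀ n : ℕ, 0 < n → StronglyNHomogeneous X n) (p : (X ≃ₜ X) × (X ≃ₜ X)) :
    ¬ ContinuousAt (fun p : (X ≃ₜ X) × (X ≃ₜ X) => p.2.trans p.1) p := by
  obtain ⟨f₀, g₀⟩ := p
  intro hcont
  obtain ⟨x⟩ := ‹Nonempty X›
  obtain ⟨z, hz⟩ : ∃ z, z ≠ f₀ (g₀ x) := (𝓝[≠] (f₀ (g₀ x))).nonempty_of_mem self_mem_nhdsWithin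
  have heval : ContinuousAt (fun p : (X ≃ₜ X) × (X ≃ₜ X) => p.1 (p.2 x)) (f₀, g₀) :=
    (continuous_homPTop_eval x).continuousAt.comp hcont
  obtain ⟨A, hA, B, hB, hAB⟩ := mem_nhds_prod_iff.1 (heval.eventually_ne hz.symm)
  have hA_any : ∀ᶠ y in 𝓝[≠] (g₀ x), ∀ z, ∃ f ∈ A, f y = z :=
    (eventually_cofinite_forall_exists_apply_eq hhom hA).filter_mono (nhdsNE_le_cofinite _)
  have hB_near : ∀ᶠ y in 𝓝[≠] (g₀ x), ∃ g ∈ B, g x = y :=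
    (eventually_nhds_exists_apply_eq hhom hB x).filter_mono nhdsWithin_le_nhds
  obtain ⟨y, hfy, g, hgB, rfl⟩ := (hA_any.and hB_near).exists
  obtain ⟨f, hfA, hfz⟩ := hfy z
  exact hAB (mk_mem_prod hfA hgB) hfz

end PointwiseConvergence

/-- If a nonempty Tychonoff space `X` has no isolated points and is strongly `n`-homogeneous
for every positive `n`, then composition `(f, g) ↦ f ∘ g` is not continuous on
`Hom_p(X) × Hom_p(X)`. -/
theorem composition_not_continuous_of_stronglyNHomogeneous
    {X : Type*} [TopologicalSpace X] [T1Space X] [CompletelyRegularSpace X] [Nonempty X]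
    (hiso : ∀ x : X, ¬ IsOpen ({x} : Set X))
    (hhom : ∀ n : ℕ, 0 < n → StronglyNHomogeneous X n) :
    ¬ Continuous[@instTopologicalSpaceProd _ _ (homPTop X) (homPTop X), homPTop X]
        (fun p : (X ≃ₜ X) × (X ≃ₜ X) => p.2.trans p.1) := by
  have := perfectSpace_of_forall_not_isOpen_singleton hiso
  let := homPTop X
  exact fun hcont => composition_not_continuous_of_stronglyNHomogeneous_general hhom
    (Homeomorph.refl X, Homeomorph.refl X) hcont.continuousAt
end

section
/- Let X be a nonempty Tychonoff (completely regular T1) space with no isolated points which is strongly n-homogeneous for every positive integer n. Then the inversion map f ↦ f⁻¹ from Hom_p(X) to Hom_p(X) is not continuous. -/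
open Topology

/-!
Suppose `x` is not isolated and infinitely many points avoid some neighbourhood `U` of `x`. A basic
neighbourhood of the identity in `Hom_p(X)` only restricts the values on a finite set `I`. Take
`y ∉ I` outside `U` and `z ∉ I` close to `x`; strong homogeneity realises the 3-cycle
`y ↦ x ↦ z ↦ y` on `I ∪ {x, y}` by a homeomorphism `f`. It is as close to the identity as we please,
yet `f⁻¹ x = y` stays outside `U`.
-/

section

variable {X : Type*} [TopologicalSpace X]

theorem StronglyNHomogeneous.exists_homeomorph_eqOn {A : Set X} {h : X → X}
    (hA : StronglyNHomogeneous X A.ncard) (hh : Set.InjOn h A) : ∃ f : X ≃ₜ X, Set.EqOn f h A :=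
  hA A (h '' A) rfl hh.ncard_image h hh.bijOn_image

theorem continuous_homPTop_apply (x : X) : Continuous[homPTop X, _] fun f : X ≃ₜ X => f x := by
  let := homPTop X
  exact (continuous_apply x).comp continuous_induced_dom

theorem mem_nhds_homPTop_iff {f : X ≃ₜ X} {S : Set (X ≃ₜ X)} :
    S ∈ @nhds _ (homPTop X) f ↔ ∃ I : Set X, I.Finite ∧ ∃ t : X → Set X,
      (∀ x, t x ∈ 𝓝 (f x)) ∧ ∀ g : X ≃ₜ X, (∀ x ∈ I, g x ∈ t x) → g ∈ S := by
  rw [homPTop, nhds_induced, nhds_pi, Filter.mem_comap]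
  constructor
  · rintro ⟨T, hT, hTS⟩
    obtain ⟨I, hI, t, ht, hIt⟩ := Filter.mem_pi.1 hT
    exact ⟨I, hI, t, ht, fun g hg => hTS (hIt hg)⟩
  · rintro ⟨I, hI, t, ht, hIt⟩
    exact ⟨I.pi t, Filter.pi_mem_pi hI fun x _ => ht x, hIt⟩

theorem exists_homeomorph_apply_eq_apply_eq_eqOn_id
    (hhom : ∀ n : ℕ, 0 < n → StronglyNHomogeneous X n) {I : Set X} (hI : I.Finite) {x y z : X}
    (hy : y ∉ insert x I) (hz : z ∉ insert x (insert y I)) :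
    ∃ f : X ≃ₜ X, f y = x ∧ f x = z ∧ Set.EqOn f id (I \ {x}) := by
  classical
  simp only [Set.mem_insert_iff, not_or, ← ne_eq] at hy hz
  obtain ⟨hyx, hyI⟩ := hy
  obtain ⟨hzx, hzy, hzI⟩ := hz
  let cycle : Equiv.Perm X := Equiv.swap x y * Equiv.swap x z
  have hcycle_y : cycle y = x := by
    rw [Equiv.Perm.mul_apply, Equiv.swap_apply_of_ne_of_ne hyx hzy.symm, Equiv.swap_apply_right]
  have hcycle_x : cycle x = z := by
    rw [Equiv.Perm.mul_apply, Equiv.swap_apply_left, Equiv.swap_apply_of_ne_of_ne hzx hzy]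
  have hcycle_I : Set.EqOn cycle id (I \ {x}) := fun a ⟨haI, hax⟩ => by
    rw [Equiv.Perm.mul_apply, Equiv.swap_apply_of_ne_of_ne hax (ne_of_mem_of_not_mem haI hzI),
      Equiv.swap_apply_of_ne_of_ne hax (ne_of_mem_of_not_mem haI hyI), id]
  have hcard : 0 < (insert x (insert y I)).ncard :=
    (Set.ncard_pos ((hI.insert y).insert x)).2 (Set.insert_nonempty _ _)
  obtain ⟨f, hf⟩ := (hhom _ hcard).exists_homeomorph_eqOn cycle.injective.injOn
  refine ⟨f, (hf (by simp)).trans hcycle_y, (hf (by simp)).trans hcycle_x, fun a ha => ?_⟩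
  exact (hf (Or.inr (Or.inr ha.1))).trans (hcycle_I ha)

theorem refl_mem_closure_setOf_symm_apply_mem [T1Space X]
    (hhom : ∀ n : ℕ, 0 < n → StronglyNHomogeneous X n) (x : X) [(𝓝[≠] x).NeBot] {K : Set X}
    (hK : K.Infinite) :
    Homeomorph.refl X ∈ @closure _ (homPTop X) {f : X ≃ₜ X | f.symm x ∈ K} := by
  let := homPTop X
  refine mem_closure_iff_nhds.2 fun S hS => ?_
  obtain ⟨I, hI, t, ht, htS⟩ := mem_nhds_homPTop_iff.1 hS
  obtain ⟨y, hyK, hy⟩ := hK.exists_notMem_finite (hI.insert x)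
  obtain ⟨z, hzt, hz⟩ :=
    (infinite_of_mem_nhds x (ht x)).exists_notMem_finite ((hI.insert y).insert x)
  obtain ⟨f, hfy, hfx, hfI⟩ := exists_homeomorph_apply_eq_apply_eq_eqOn_id hhom hI hy hz
  have hfS : f ∈ S := htS f fun a ha => by
    obtain rfl | hax := eq_or_ne a x
    · rwa [hfx]
    · rw [hfI ⟨ha, hax⟩]
      exact mem_of_mem_nhds (ht a)
  have hfK : f.symm x ∈ K := by rwa [← hfy, f.symm_apply_apply]
  exact ⟨f, hfS, hfK⟩

theorem exists_mem_nhds_infinite_compl [T2Space X] [PerfectSpace X] (x : X) :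
    ∃ U ∈ 𝓝 x, Uᶜ.Infinite := by
  obtain ⟨y, hyx⟩ := (PerfectSpace.not_isolated x).nonempty_of_mem self_mem_nhdsWithin
  obtain ⟨V, U, hV, hU, hVU⟩ := t2_separation_nhds hyx
  exact ⟨U, hU, (infinite_of_mem_nhds y hV).mono hVU.subset_compl_right⟩

theorem inversion_not_continuous_of_stronglyNHomogeneous_general [T1Space X]
    (hhom : ∀ n : ℕ, 0 < n → StronglyNHomogeneous X n) {x : X} [(𝓝[≠] x).NeBot] {U : Set X}
    (hU : U ∈ 𝓝 x) (hUc : Uᶜ.Infinite) :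
    ¬ Continuous[homPTop X, homPTop X] (fun f : X ≃ₜ X => f.symm) := by
  intro hinv
  let := homPTop X
  have hsymm : Continuous fun f : X ≃ₜ X => f.symm x := (continuous_homPTop_apply x).comp hinv
  have hx : x ∈ closure Uᶜ := map_mem_closure hsymm
    (refl_mem_closure_setOf_symm_apply_mem hhom x hUc) fun _ hf => hf
  rw [closure_compl] at hx
  exact hx (mem_interior_iff_mem_nhds.2 hU)

end

/-- If a nonempty Tychonoff space `X` has no isolated points and is strongly `n`-homogeneous
for every positive `n`, then inversion `f ↦ f⁻¹` is not continuous on `Hom_p(X)`. -/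
theorem inversion_not_continuous_of_stronglyNHomogeneous
    {X : Type*} [TopologicalSpace X] [T1Space X] [CompletelyRegularSpace X] [Nonempty X]
    (hiso : ∀ x : X, ¬ IsOpen ({x} : Set X))
    (hhom : ∀ n : ℕ, 0 < n → StronglyNHomogeneous X n) :
    ¬ Continuous[homPTop X, homPTop X] (fun f : X ≃ₜ X => f.symm) := by
  have : PerfectSpace X := perfectSpace_iff_forall_not_isolated.2 fun x =>
    ⟨mt (isOpen_singleton_iff_punctured_nhds x).2 (hiso x)⟩
  obtain ⟨U, hU, hUc⟩ := exists_mem_nhds_infinite_compl (Classical.arbitrary X)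
  exact inversion_not_continuous_of_stronglyNHomogeneous_general hhom hU hUc
end

section
/- For every Tychonoff (completely regular T1) space X there exist a Tychonoff space Y and a closed embedding e : X → Y such that: (i) every self-homeomorphism f of X extends over e, i.e. there is a self-homeomorphism g of Y with g ∘ e = e ∘ f; and (ii) Hom_p(Y) is a topological group. -/
open Topology

universe u

/-- `Hom_p(X)` is a topological group: composition is jointly continuous and inversion
is continuous, with respect to the topology of pointwise convergence. -/
def IsTopGroupHomP (Y : Type*) [TopologicalSpace Y] : Prop :=
  Continuous[@instTopologicalSpaceProd _ _ (homPTop Y) (homPTop Y), homPTop Y]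
      (fun p : (Y ≃ₜ Y) × (Y ≃ₜ Y) => p.2.trans p.1) ∧
  Continuous[homPTop Y, homPTop Y] (fun f : Y ≃ₜ Y => f.symm)

/-!
Attach to every point of `X` uncountably many whiskers, i.e. half-open intervals glued at their
endpoint, and topologize the result `Y` as a subspace of `X × ℝ ^ κ` via the root of a point and its
heights along all the whiskers. A neighbourhood of `x ∈ X` then contains all but finitely many of
the whiskers at `x`, so `Y` is first countable at the points of the open whiskers but at no point of
`X`. Therefore every self-homeomorphism of `Y` preserves the closed subspace `X` and permutes the
whiskers. If two homeomorphisms send one point of a whisker at `x` to the same whisker, which is an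
open condition, they agree at `x` up to inseparability. Along a whisker a homeomorphism is a
strictly increasing or strictly decreasing function, and for such functions pointwise convergence
gives the joint continuity of evaluation and the convergence of inverses.
-/

open Filter Set

section MonotoneFamilies

variable {α A B : Type*} [LinearOrder A] [TopologicalSpace A] [OrderTopology A]
  [LinearOrder B] [TopologicalSpace B] {l : Filter α} {F : α → A → B} {g : A → B} {s : A}

theorem tendsto_uncurry_of_eventually_monotone_or_antitone [OrderTopology B]
    (hF : ∀ᶠ a in l, Monotone (F a) ∨ Antitone (F a))
    (hlim : ∀ t, Tendsto (fun a => F a t) l (𝓝 (g t))) (hg : ContinuousAt g s) :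
    Tendsto (Function.uncurry F) (l ×ˢ 𝓝 s) (𝓝 (g s)) := by
  have eventually_mem : ∀ U : Set B, IsOpen U → U.OrdConnected → g s ∈ U →
      ∀ᶠ p in l ×ˢ 𝓝 s, Function.uncurry F p ∈ U := by
    intro U hU hUconn hsU
    obtain ⟨b, c, hs, hbc, hbcU⟩ := exists_Icc_mem_subset_of_mem_nhds (hg (hU.mem_nhds hsU))
    have hle : b ≤ c := hs.1.trans hs.2
    have hb : ∀ᶠ a in l, F a b ∈ U := hlim b (hU.mem_nhds (hbcU (left_mem_Icc.2 hle)))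
    have hc : ∀ᶠ a in l, F a c ∈ U := hlim c (hU.mem_nhds (hbcU (right_mem_Icc.2 hle)))
    filter_upwards [(hF.and (hb.and hc)).prod_mk hbc]
    rintro ⟨a, t⟩ ⟨⟨hmono, hab, hac⟩, ht⟩
    have ht' : t ∈ uIcc b c := Icc_subset_uIcc ht
    exact hUconn.uIcc_subset hab hac
      (hmono.elim (fun h => h.mapsTo_uIcc ht') (fun h => h.mapsTo_uIcc ht'))
  exact tendsto_order.2 ⟨fun c hc => eventually_mem _ isOpen_Ioi ordConnected_Ioi hc,
    fun c hc => eventually_mem _ isOpen_Iio ordConnected_Iio hc⟩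

theorem tendsto_of_apply_eq_of_strictMono [OrderClosedTopology B] {r : α → A}
    (hF : ∀ᶠ a in l, StrictMono (F a) ∨ StrictAnti (F a))
    (hlim : ∀ t, Tendsto (fun a => F a t) l (𝓝 (g t))) (hg : StrictMono g)
    (hr : ∀ᶠ a in l, F a (r a) = g s) : Tendsto r l (𝓝 s) := by
  refine tendsto_order.2 ⟨fun b hb => ?_, fun c hc => ?_⟩
  · filter_upwards [hF, hr, (hlim b).eventually_lt (hlim s) (hg hb),
      (hlim b).eventually_lt_const (hg hb)] with a hmono hra hbs hbr
    rw [← hra] at hbr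
    rcases hmono with hmono | hanti
    · exact hmono.lt_iff_lt.1 hbr
    · exact absurd (hanti.lt_iff_gt.1 hbs) hb.not_gt
  · filter_upwards [hF, hr, (hlim s).eventually_lt (hlim c) (hg hc),
      (hlim c).eventually_const_lt (hg hc)] with a hmono hra hsc hrc
    rw [← hra] at hrc
    rcases hmono with hmono | hanti
    · exact hmono.lt_iff_lt.1 hrc
    · exact absurd (hanti.lt_iff_gt.1 hsc) hc.not_gt

theorem tendsto_of_apply_eq_of_strictMono_or_strictAnti [OrderClosedTopology B] {r : α → A}
    (hF : ∀ᶠ a in l, StrictMono (F a) ∨ StrictAnti (F a))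
    (hlim : ∀ t, Tendsto (fun a => F a t) l (𝓝 (g t))) (hg : StrictMono g ∨ StrictAnti g)
    (hr : ∀ᶠ a in l, F a (r a) = g s) : Tendsto r l (𝓝 s) := by
  rcases hg with hmono | hanti
  · exact tendsto_of_apply_eq_of_strictMono hF hlim hmono hr
  · have hF' : ∀ᶠ a in l, StrictMono (OrderDual.toDual ∘ F a) ∨
        StrictAnti (OrderDual.toDual ∘ F a) :=
      hF.mono fun a h => h.symm.imp StrictAnti.dual_right StrictMono.dual_right
    exact tendsto_of_apply_eq_of_strictMono (g := OrderDual.toDual ∘ g) hF' hlim hanti.dual_right hr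

end MonotoneFamilies

theorem tendsto_nhds_of_eventually_inseparable {α Y : Type*} [TopologicalSpace Y] {l : Filter α}
    {u : α → Y} {y : Y} (h : ∀ᶠ a in l, Inseparable (u a) y) : Tendsto u l (𝓝 y) := by
  refine tendsto_def.2 fun U hU => ?_
  filter_upwards [h] with a ha
  rw [← ha.nhds_eq] at hU
  exact mem_preimage.2 (mem_of_mem_nhds hU)

theorem continuous_homP_apply {Y : Type*} [TopologicalSpace Y] (y : Y) :
    Continuous[homPTop Y, _] fun f : Y ≃ₜ Y => f y :=
  letI := homPTop Y
  (continuous_apply y).comp continuous_induced_dom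

universe v

/-- The space `X` with whiskers indexed by `ι` attached at each of its points: for every
`i : X × ι` an interval `[0, ∞)` is glued at `0` to the point `i.1`. The point at height `exp s` of
this interval is `whisker i s`, so the open whisker is parametrized by the whole real line and
approaches `base i.1` as `s` tends to `-∞`. -/
inductive Whiskered (X : Type u) (ι : Type v) : Type (max u v)
  | base (x : X) : Whiskered X ι
  | whisker (i : X × ι) (s : ℝ) : Whiskered X ι

namespace Whiskered

variable {X Z : Type*} {ι : Type*}

/-- The point of `X` at which the whisker through a given point is attached. -/
def root : Whiskered X ι → X
  | base x => x
  | whisker i _ => i.1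

open scoped Classical in
/-- The heights of a point along all the whiskers; at most one of them is nonzero. -/
noncomputable def height : Whiskered X ι → X × ι → ℝ
  | base _ => 0
  | whisker i s => Pi.single i (Real.exp s)

/-- The coordinates of a point of `Whiskered X ι`, which define its topology. -/
noncomputable def toProd (y : Whiskered X ι) : X × (X × ι → ℝ) := (root y, height y)

theorem height_whisker_self (i : X × ι) (s : ℝ) : height (whisker i s) i = Real.exp s := by
  simp [height]

theorem height_whisker_of_ne {i j : X × ι} (h : j ≠ i) (s : ℝ) : height (whisker i s) j = 0 := by
  simp [height, h]

theorem height_base (x : X) (i : X × ι) : height (base x) i = 0 := rfl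

theorem whisker_injective (i : X × ι) : Function.Injective (whisker i) :=
  fun _ _ h => (whisker.inj h).2

theorem range_whisker (i : X × ι) : range (whisker i) = {y | 0 < height y i} := by
  ext y
  refine ⟨?_, fun hy => ?_⟩
  · rintro ⟨s, rfl⟩
    simpa only [mem_ofPred_eq, height_whisker_self] using Real.exp_pos s
  · cases y with
    | base x => exact (lt_irrefl (0 : ℝ) hy).elim
    | whisker j s =>
      by_cases hij : i = j
      · exact ⟨s, by rw [hij]⟩
      · rw [mem_ofPred_eq, height_whisker_of_ne hij] at hy
        exact absurd hy (lt_irrefl 0)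

theorem compl_range_base : (range (base : X → Whiskered X ι))ᶜ = ⋃ i, range (whisker i) := by
  ext y
  cases y <;> simp

theorem toProd_injective : Function.Injective (toProd : Whiskered X ι → _) := by
  intro y z h
  obtain ⟨hroot, hheight⟩ := Prod.mk.inj h
  have mem_whisker (i) : y ∈ range (whisker i) ↔ z ∈ range (whisker i) := by
    rw [range_whisker, mem_ofPred_eq, mem_ofPred_eq, hheight]
  cases y with
  | whisker i s =>
    obtain ⟨t, rfl⟩ := (mem_whisker i).1 ⟨s, rfl⟩
    have hexp := congrFun hheight i
    rw [height_whisker_self, height_whisker_self] at hexp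
    rw [Real.exp_injective hexp]
  | base x =>
    cases z with
    | base x' => exact congrArg base hroot
    | whisker i s => exact absurd ((mem_whisker i).2 ⟨s, rfl⟩) (by simp)

/-- The map between whiskered spaces induced by a map of the underlying spaces. -/
def map (f : X → Z) : Whiskered X ι → Whiskered Z ι
  | base x => base (f x)
  | whisker i s => whisker (f i.1, i.2) s

theorem root_map (f : X → Z) (y : Whiskered X ι) : root (map f y) = f (root y) := by
  cases y <;> rfl

theorem height_map (f : X ≃ Z) (y : Whiskered X ι) (j : Z × ι) :
    height (map f y) j = height y (f.symm j.1, j.2) := by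
  cases y with
  | base x => rfl
  | whisker i s =>
    by_cases hj : j = (f i.1, i.2)
    · simp [hj, map, height_whisker_self]
    · have hi : (f.symm j.1, j.2) ≠ i := by
        rintro rfl
        simp at hj
      rw [map, height_whisker_of_ne hj, height_whisker_of_ne hi]

/-- The parameter of a point on the whisker `i`, with junk value `0` off that whisker. -/
noncomputable def param (i : X × ι) (y : Whiskered X ι) : ℝ := Real.log (height y i)

theorem param_whisker (i : X × ι) (s : ℝ) : param i (whisker i s) = s := by
  rw [param, height_whisker_self, Real.log_exp]

theorem whisker_param {i : X × ι} {y : Whiskered X ι} (hy : y ∈ range (whisker i)) :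
    whisker i (param i y) = y := by
  obtain ⟨s, rfl⟩ := hy
  rw [param_whisker]

section Topology

variable [TopologicalSpace X] [TopologicalSpace Z]

noncomputable instance : TopologicalSpace (Whiskered X ι) :=
  TopologicalSpace.induced toProd inferInstance

theorem isEmbedding_toProd : IsEmbedding (toProd : Whiskered X ι → _) :=
  ⟨⟨rfl⟩, toProd_injective⟩

theorem t1Space [T1Space X] : T1Space (Whiskered X ι) :=
  isEmbedding_toProd.t1Space

theorem completelyRegularSpace [CompletelyRegularSpace X] :
    CompletelyRegularSpace (Whiskered X ι) :=
  isEmbedding_toProd.isInducing.completelyRegularSpace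

theorem continuous_root : Continuous (root : Whiskered X ι → X) :=
  isEmbedding_toProd.continuous.fst

theorem continuous_height (i : X × ι) : Continuous fun y : Whiskered X ι => height y i :=
  (continuous_apply i).comp isEmbedding_toProd.continuous.snd

theorem tendsto_nhds_iff {α : Type*} {l : Filter α} {u : α → Whiskered X ι} {y : Whiskered X ι} :
    Tendsto u l (𝓝 y) ↔ Tendsto (fun a => root (u a)) l (𝓝 (root y)) ∧
      ∀ i, Tendsto (fun a => height (u a) i) l (𝓝 (height y i)) := by
  rw [isEmbedding_toProd.tendsto_nhds_iff, ← tendsto_pi_nhds]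
  exact Prod.tendsto_iff _ _

theorem continuous_iff {W : Type*} [TopologicalSpace W] {u : W → Whiskered X ι} :
    Continuous u ↔ Continuous (fun w => root (u w)) ∧ ∀ i, Continuous fun w => height (u w) i := by
  rw [isEmbedding_toProd.continuous_iff, ← continuous_pi_iff]
  exact continuous_prodMk

theorem continuous_whisker (i : X × ι) : Continuous (whisker i) := by
  refine continuous_iff.2 ⟨continuous_const, fun j => ?_⟩
  by_cases hj : j = i
  · simpa only [hj, height_whisker_self] using Real.continuous_exp
  · simpa only [height_whisker_of_ne hj] using continuous_const

theorem isOpen_range_whisker (i : X × ι) : IsOpen (range (whisker i)) := by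
  rw [range_whisker]
  exact isOpen_lt continuous_const (continuous_height i)

theorem isOpenEmbedding_whisker (i : X × ι) : IsOpenEmbedding (whisker i) := by
  have hexp : (fun y => height y i) ∘ whisker i = Real.exp := funext (height_whisker_self i)
  refine ⟨.of_comp (continuous_whisker i) (continuous_height i) ?_, isOpen_range_whisker i⟩
  rw [hexp]
  exact Real.isOpenEmbedding_exp.isEmbedding

theorem isClosedEmbedding_base : IsClosedEmbedding (base : X → Whiskered X ι) := by
  have hbase : Continuous (base : X → Whiskered X ι) :=
    continuous_iff.2 ⟨continuous_id, fun _ => continuous_const⟩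
  refine ⟨.of_comp hbase continuous_root IsEmbedding.id, ⟨?_⟩⟩
  rw [compl_range_base]
  exact isOpen_iUnion isOpen_range_whisker

theorem closure_range_whisker_subset (i : X × ι) :
    closure (range (whisker i)) ⊆ range (whisker i) ∪ range base := by
  intro y hy
  cases y with
  | base x => exact .inr ⟨x, rfl⟩
  | whisker j s =>
    obtain ⟨_, ⟨t, rfl⟩, ⟨t', ht'⟩⟩ := mem_closure_iff.1 hy _ (isOpen_range_whisker j) ⟨s, rfl⟩
    obtain rfl : i = j := (whisker.inj ht').1
    exact .inl ⟨s, rfl⟩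

theorem tendsto_whisker_atBot (i : X × ι) : Tendsto (whisker i) atBot (𝓝 (base i.1)) := by
  refine tendsto_nhds_iff.2 ⟨tendsto_const_nhds, fun j => ?_⟩
  by_cases hj : j = i
  · simpa only [hj, height_base, height_whisker_self] using Real.tendsto_exp_atBot
  · simpa only [height_base, height_whisker_of_ne hj] using tendsto_const_nhds

theorem continuousAt_param {i : X × ι} {y : Whiskered X ι} (hy : y ∈ range (whisker i)) :
    ContinuousAt (param i) y := by
  rw [range_whisker] at hy
  exact (continuous_height i).continuousAt.log hy.ne'

theorem continuous_map (f : X ≃ₜ Z) : Continuous (map f : Whiskered X ι → Whiskered Z ι) := by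
  refine continuous_iff.2 ⟨?_, fun j => ?_⟩
  · exact (f.continuous.comp continuous_root).congr fun y => (root_map f y).symm
  · exact (continuous_height _).congr fun y => (height_map f.toEquiv y j).symm

/-- The homeomorphism of whiskered spaces induced by a homeomorphism of the underlying spaces. -/
def mapHomeomorph (f : X ≃ₜ Z) : Whiskered X ι ≃ₜ Whiskered Z ι where
  toFun := map f
  invFun := map f.symm
  left_inv y := by cases y <;> simp [map]
  right_inv y := by cases y <;> simp [map]
  continuous_toFun := continuous_map f
  continuous_invFun := continuous_map f.symm

theorem isCountablyGenerated_nhds_whisker (i : X × ι) (s : ℝ) :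
    (𝓝 (whisker i s)).IsCountablyGenerated := by
  rw [← (isOpenEmbedding_whisker i).map_nhds_eq]
  infer_instance

theorem not_whisker_specializes_base (i : X × ι) (s : ℝ) (x : X) : ¬ whisker i s ⤳ base x := by
  intro h
  have hheight := (h.map (continuous_height i)).eq
  rw [height_whisker_self] at hheight
  exact (Real.exp_pos s).ne' hheight

theorem tendsto_whisker_cofinite (x : X) (s : ℝ) :
    Tendsto (fun k : ι => whisker (x, k) s) cofinite (𝓝 (base x)) := by
  refine tendsto_nhds_iff.2 ⟨tendsto_const_nhds, fun j => tendsto_const_nhds.congr' ?_⟩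
  filter_upwards [(finite_singleton j.2).compl_mem_cofinite] with k hk
  have hj : j ≠ (x, k) := fun h => hk (by rw [h]; rfl)
  rw [height_whisker_of_ne hj, height_base]

end Topology

section Homeomorph

local instance {Y : Type*} [TopologicalSpace Y] : TopologicalSpace (Y ≃ₜ Y) := homPTop Y

variable [TopologicalSpace X] {f f₀ : Whiskered X ι ≃ₜ Whiskered X ι}
  {i j : X × ι} {s : ℝ}

theorem eventually_apply_whisker_mem_range (h : f₀ (whisker i s) ∈ range (whisker j)) :
    ∀ᶠ f in 𝓝 f₀, f (whisker i s) ∈ range (whisker j) :=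
  (continuous_homP_apply (whisker i s)).continuousAt ((isOpen_range_whisker j).mem_nhds h)

variable [Uncountable ι]

theorem not_isCountablyGenerated_nhds_base (x : X) :
    ¬ (𝓝 (base x : Whiskered X ι)).IsCountablyGenerated := by
  intro _
  have hcount := (tendsto_whisker_cofinite (ι := ι) x 0).countable_compl_preimage_ker
  have huniv : ((fun k : ι => whisker (x, k) 0) ⁻¹' (𝓝 (base x)).ker)ᶜ = univ := by
    simp [ker_nhds_eq_specializes, not_whisker_specializes_base]
  rw [huniv] at hcount
  exact not_countable_univ hcount

variable (f) in
theorem exists_apply_whisker_mem_range (i : X × ι) (s : ℝ) :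
    ∃ j, f (whisker i s) ∈ range (whisker j) := by
  cases hf : f (whisker i s) with
  | base x =>
    have := isCountablyGenerated_nhds_whisker i s
    refine absurd ?_ (not_isCountablyGenerated_nhds_base (ι := ι) x)
    rw [← hf, ← f.map_nhds_eq]
    infer_instance
  | whisker j t => exact ⟨j, t, rfl⟩

variable (f) in
theorem exists_apply_base_eq (x : X) : ∃ x', f (base x) = base x' := by
  cases hf : f (base x) with
  | base x' => exact ⟨x', rfl⟩
  | whisker j t =>
    obtain ⟨k, u, hu⟩ := exists_apply_whisker_mem_range f.symm j t
    rw [← hf, f.symm_apply_apply] at hu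
    cases hu

theorem apply_whisker_mem_range (h : f (whisker i s) ∈ range (whisker j)) (t : ℝ) :
    f (whisker i t) ∈ range (whisker j) := by
  have hconn : IsPreconnected (range fun t => f (whisker i t)) :=
    isPreconnected_range (f.continuous.comp (continuous_whisker i))
  refine hconn.subset_of_closure_inter_subset (isOpen_range_whisker j) ⟨_, ⟨s, rfl⟩, h⟩ ?_ ⟨t, rfl⟩
  rintro _ ⟨hclosure, ⟨t', rfl⟩⟩
  refine (closure_range_whisker_subset j hclosure).resolve_right ?_
  rintro ⟨x, hx⟩
  obtain ⟨k, u, hu⟩ := exists_apply_whisker_mem_range f i t'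
  cases hx.trans hu.symm

theorem symm_apply_whisker_mem_range (h : f (whisker i s) ∈ range (whisker j)) (u : ℝ) :
    f.symm (whisker j u) ∈ range (whisker i) := by
  obtain ⟨t, ht⟩ := h
  exact apply_whisker_mem_range ⟨s, by rw [ht, f.symm_apply_apply]⟩ u

theorem base_specializes_apply_base (h : f (whisker i s) ∈ range (whisker j)) :
    base j.1 ⤳ f (base i.1) := by
  obtain ⟨x', hx'⟩ := exists_apply_base_eq f i.1
  have hlim : Tendsto (fun t => root (f (whisker i t))) atBot (𝓝 (root (f (base i.1)))) :=
    ((continuous_root.comp f.continuous).tendsto _).comp (tendsto_whisker_atBot i)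
  have hconst : (fun t => root (f (whisker i t))) = fun _ => j.1 := by
    funext t
    obtain ⟨u, hu⟩ := apply_whisker_mem_range h t
    rw [← hu]
    rfl
  rw [hconst, hx', Tendsto, Filter.map_const] at hlim
  rw [hx']
  exact (specializes_iff_pure.2 hlim).map isClosedEmbedding_base.continuous

theorem inseparable_apply_base (h : f (whisker i s) ∈ range (whisker j)) :
    Inseparable (f (base i.1)) (base j.1) := by
  have hspec := (base_specializes_apply_base (symm_apply_whisker_mem_range h 0)).map f.continuous
  rw [f.apply_symm_apply] at hspec
  exact hspec.antisymm (base_specializes_apply_base h)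

/-- The expression of `f` in the parameters of the whiskers `i` and `j`; it is meaningful when `f`
maps the whisker `i` to the whisker `j`. -/
noncomputable def transition (f : Whiskered X ι ≃ₜ Whiskered X ι) (i j : X × ι) (t : ℝ) : ℝ :=
  param j (f (whisker i t))

theorem whisker_transition (h : f (whisker i s) ∈ range (whisker j)) (t : ℝ) :
    whisker j (transition f i j t) = f (whisker i t) :=
  whisker_param (apply_whisker_mem_range h t)

theorem transition_transition_symm (h : f (whisker i s) ∈ range (whisker j)) (u : ℝ) :
    transition f i j (transition f.symm j i u) = u := by
  rw [transition, whisker_transition (symm_apply_whisker_mem_range h u), f.apply_symm_apply,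
    param_whisker]

theorem continuous_transition (h : f (whisker i s) ∈ range (whisker j)) :
    Continuous (transition f i j) :=
  continuous_iff_continuousAt.2 fun t =>
    (continuousAt_param (apply_whisker_mem_range h t)).comp
      (f := fun t => f (whisker i t)) (f.continuous.comp (continuous_whisker i)).continuousAt

theorem strictMono_or_strictAnti_transition (h : f (whisker i s) ∈ range (whisker j)) :
    StrictMono (transition f i j) ∨ StrictAnti (transition f i j) := by
  refine (continuous_transition h).strictMono_of_inj fun a b hab => ?_
  apply whisker_injective i
  apply f.injective
  rw [← whisker_transition h a, ← whisker_transition h b, hab]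

theorem tendsto_transition (h : f₀ (whisker i s) ∈ range (whisker j)) (t : ℝ) :
    Tendsto (fun f => transition f i j t) (𝓝 f₀) (𝓝 (transition f₀ i j t)) :=
  (continuousAt_param (apply_whisker_mem_range h t)).tendsto.comp
    (continuous_homP_apply (whisker i t)).continuousAt

theorem eventually_strictMono_or_strictAnti_transition
    (h : f₀ (whisker i s) ∈ range (whisker j)) :
    ∀ᶠ f in 𝓝 f₀, StrictMono (transition f i j) ∨ StrictAnti (transition f i j) :=
  (eventually_apply_whisker_mem_range h).mono fun _ => strictMono_or_strictAnti_transition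

variable (f₀)

theorem continuousAt_eval_whisker (i : X × ι) (s : ℝ) :
    ContinuousAt (fun p : (Whiskered X ι ≃ₜ Whiskered X ι) × Whiskered X ι => p.1 p.2)
      (f₀, whisker i s) := by
  obtain ⟨j, h⟩ := exists_apply_whisker_mem_range f₀ i s
  have hmono := (eventually_strictMono_or_strictAnti_transition h).mono fun f hf =>
    hf.imp StrictMono.monotone StrictAnti.antitone
  have hlim : Tendsto (fun p : _ × ℝ => whisker j (transition p.1 i j p.2)) (𝓝 f₀ ×ˢ 𝓝 s)
      (𝓝 (f₀ (whisker i s))) := by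
    rw [← whisker_transition h s]
    exact ((continuous_whisker j).tendsto _).comp <|
      tendsto_uncurry_of_eventually_monotone_or_antitone hmono (tendsto_transition h)
        (continuous_transition h).continuousAt
  rw [ContinuousAt, nhds_prod_eq, ← (isOpenEmbedding_whisker i).map_nhds_eq, prod_map_right,
    tendsto_map'_iff]
  refine hlim.congr' ?_
  filter_upwards [(eventually_apply_whisker_mem_range h).prod_inl (𝓝 s)] with p hp
  exact whisker_transition hp p.2

theorem tendsto_symm_apply_whisker (j : X × ι) (u : ℝ) :
    Tendsto (fun f : Whiskered X ι ≃ₜ Whiskered X ι => f.symm (whisker j u)) (𝓝 f₀)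
      (𝓝 (f₀.symm (whisker j u))) := by
  obtain ⟨i, s, hs⟩ := exists_apply_whisker_mem_range f₀.symm j u
  have hsu : f₀ (whisker i s) = whisker j u := by rw [hs, f₀.apply_symm_apply]
  have h : f₀ (whisker i s) ∈ range (whisker j) := ⟨u, hsu.symm⟩
  have hmem := eventually_apply_whisker_mem_range h
  have hr : ∀ᶠ f in 𝓝 f₀, transition f i j (transition f.symm j i u) = transition f₀ i j s := by
    filter_upwards [hmem] with f hf
    rw [transition_transition_symm hf, transition, hsu, param_whisker]
  have hlim : Tendsto (fun f => transition f.symm j i u) (𝓝 f₀) (𝓝 s) :=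
    tendsto_of_apply_eq_of_strictMono_or_strictAnti
      (eventually_strictMono_or_strictAnti_transition h) (tendsto_transition h)
      (strictMono_or_strictAnti_transition h) hr
  rw [← hs]
  refine (((continuous_whisker i).tendsto s).comp hlim).congr' ?_
  filter_upwards [hmem] with f hf
  exact whisker_transition (symm_apply_whisker_mem_range hf u) u

theorem eventually_inseparable_apply_base (x : X) :
    ∀ᶠ f in 𝓝 f₀, Inseparable (f (base x)) (f₀ (base x)) := by
  obtain ⟨k⟩ : Nonempty ι := inferInstance
  obtain ⟨j, h⟩ := exists_apply_whisker_mem_range f₀ (x, k) 0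
  filter_upwards [eventually_apply_whisker_mem_range h] with f hf
  exact (inseparable_apply_base hf).trans (inseparable_apply_base h).symm

theorem tendsto_comp_apply (g₀ : Whiskered X ι ≃ₜ Whiskered X ι) (y : Whiskered X ι) :
    Tendsto (fun p : (Whiskered X ι ≃ₜ Whiskered X ι) × (Whiskered X ι ≃ₜ Whiskered X ι) =>
      p.1 (p.2 y)) (𝓝 (f₀, g₀)) (𝓝 (f₀ (g₀ y))) := by
  cases y with
  | base x =>
    obtain ⟨x', hx'⟩ := exists_apply_base_eq g₀ x
    refine tendsto_nhds_of_eventually_inseparable ?_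
    rw [nhds_prod_eq]
    filter_upwards [(eventually_inseparable_apply_base f₀ x').prod_mk
      (eventually_inseparable_apply_base g₀ x)] with p ⟨hf, hg⟩
    rw [← hx'] at hf
    exact (hg.map p.1.continuous).trans hf
  | whisker i s =>
    obtain ⟨j, t, ht⟩ := exists_apply_whisker_mem_range g₀ i s
    have heval := continuousAt_eval_whisker f₀ j t
    rw [ht] at heval
    have hpair : Continuous fun p : (Whiskered X ι ≃ₜ Whiskered X ι) ×
        (Whiskered X ι ≃ₜ Whiskered X ι) => (p.1, p.2 (whisker i s)) :=
      continuous_fst.prodMk ((continuous_homP_apply _).comp continuous_snd)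
    exact heval.tendsto.comp (hpair.tendsto (f₀, g₀))

theorem tendsto_symm_apply (y : Whiskered X ι) :
    Tendsto (fun f : Whiskered X ι ≃ₜ Whiskered X ι => f.symm y) (𝓝 f₀) (𝓝 (f₀.symm y)) := by
  cases y with
  | base x =>
    obtain ⟨x', hx'⟩ := exists_apply_base_eq f₀.symm x
    refine tendsto_nhds_of_eventually_inseparable ?_
    filter_upwards [eventually_inseparable_apply_base f₀ x'] with f hf
    have hsymm := hf.symm.map f.symm.continuous
    rwa [f.symm_apply_apply, ← hx', f₀.apply_symm_apply] at hsymm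
  | whisker j u => exact tendsto_symm_apply_whisker f₀ j u

variable (X ι) in
theorem isTopGroupHomP : IsTopGroupHomP (Whiskered X ι) :=
  ⟨continuous_induced_rng.2 <| continuous_pi fun y => continuous_iff_continuousAt.2 fun p =>
      tendsto_comp_apply p.1 p.2 y,
    continuous_induced_rng.2 <| continuous_pi fun y => continuous_iff_continuousAt.2 fun f =>
      tendsto_symm_apply f y⟩

end Homeomorph

end Whiskered

theorem exists_closedEmbedding_homP_topologicalGroup_general
    (X : Type u) [TopologicalSpace X] :
    ∃ (Y : Type u) (_ : TopologicalSpace Y),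
      (T1Space X → T1Space Y) ∧ (CompletelyRegularSpace X → CompletelyRegularSpace Y) ∧
      ∃ e : X → Y,
        IsClosedEmbedding e ∧
        (∀ f : X ≃ₜ X, ∃ g : Y ≃ₜ Y, ∀ x : X, g (e x) = e (f x)) ∧
        IsTopGroupHomP Y :=
  ⟨Whiskered X ℝ, inferInstance, fun _ => Whiskered.t1Space,
    fun _ => Whiskered.completelyRegularSpace, Whiskered.base, Whiskered.isClosedEmbedding_base,
    fun f => ⟨Whiskered.mapHomeomorph f, fun _ => rfl⟩, Whiskered.isTopGroupHomP X ℝ⟩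

/-- Every Tychonoff space `X` admits a closed embedding into a Tychonoff space `Y` such that
every self-homeomorphism of `X` extends over the embedding, and `Hom_p(Y)` is a
topological group. -/
theorem exists_closedEmbedding_homP_topologicalGroup
    (X : Type u) [TopologicalSpace X] [T1Space X] [CompletelyRegularSpace X] :
    ∃ (Y : Type u) (tY : TopologicalSpace Y),
      @T1Space Y tY ∧ @CompletelyRegularSpace Y tY ∧
      ∃ e : X → Y,
        @Topology.IsClosedEmbedding X Y _ tY e ∧
        (∀ f : X ≃ₜ X, ∃ g : @Homeomorph Y Y tY tY, ∀ x : X, g (e x) = e (f x)) ∧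
        @IsTopGroupHomP Y tY := by
  obtain ⟨Y, tY, hT1, hCR, hY⟩ := exists_closedEmbedding_homP_topologicalGroup_general X
  exact ⟨Y, tY, hT1 inferInstance, hCR inferInstance, hY⟩
end

section
/- For any topological space X, the map x ↦ 0_x is a closed embedding of X into its Alexandroff Noodles XI: it is a homeomorphism of X onto the subspace O_X = {0_x : x ∈ X}, and O_X is closed in XI. -/
open Topology unitInterval

/-- The canonical projection sending `Sum.inl x` to `(x, 0)` and `Sum.inr p` to `p`;
its kernel is exactly the equivalence relation identifying each `x ∈ X` with `(x, 0)`. -/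
def noodleProj (X : Type*) : X ⊕ (X × unitInterval) → X × unitInterval
  | Sum.inl x => (x, 0)
  | Sum.inr p => p

/-- The equivalence relation on `X ⊕ (X × [0,1])` identifying each `x ∈ X` with `(x, 0)`. -/
def noodleSetoid (X : Type*) : Setoid (X ⊕ (X × unitInterval)) := Setoid.ker (noodleProj X)

/-- The Alexandroff Noodles of `X`: the quotient of the sum of `X` and `D × [0,1]`
(`D` the underlying set of `X`) identifying each `x ∈ X` with `(x, 0)`. -/
def Noodles (X : Type*) : Type _ := Quotient (noodleSetoid X)

/-- The topology of the sum of `X` and `D × [0,1]`, where `D` is the underlying set of `X`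
with the discrete topology. -/
def noodleSumTop (X : Type*) [t : TopologicalSpace X] :
    TopologicalSpace (X ⊕ (X × unitInterval)) :=
  @instTopologicalSpaceSum X (X × unitInterval) t
    (@instTopologicalSpaceProd X unitInterval ⊥ inferInstance)

/-- The Alexandroff Noodles carry the quotient topology. -/
instance noodlesTop (X : Type*) [TopologicalSpace X] : TopologicalSpace (Noodles X) :=
  (noodleSumTop X).coinduced (Quotient.mk (noodleSetoid X))

/-- The point `r_x` of the Alexandroff Noodles, for `x ∈ X` and `r ∈ [0,1]`
(so `0_x` is `noodlePt x 0`, the common image of `x` and `(x, 0)`). -/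
def noodlePt {X : Type*} (x : X) (r : unitInterval) : Noodles X :=
  Quotient.mk (noodleSetoid X) (Sum.inr (x, r))

/-!
A set is closed in the Noodles exactly when its trace on the base `X` and its trace on every noodle
`{x} × [0,1]` are closed. The image of a closed `A ⊆ X` has trace `A` on the base and at most the
single point `0` on each noodle, so `x ↦ 0_x` is a closed map.
-/

theorem isClosed_prod_iff_of_discrete_left {D Y : Type*} [TopologicalSpace D] [TopologicalSpace Y]
    [DiscreteTopology D] {s : Set (D × Y)} :
    IsClosed s ↔ ∀ d : D, IsClosed (Prod.mk d ⁻¹' s) := by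
  simp only [← isOpen_compl_iff, ← Set.preimage_compl]
  -- A set is open iff its membership predicate is continuous into the Sierpiński space `Prop`.
  exact continuous_Prop.symm.trans <|
    continuous_prod_of_discrete_left.trans <| forall_congr' fun _ => continuous_Prop

namespace Noodles

variable {X : Type*}

theorem mk_inl (x : X) : Quotient.mk (noodleSetoid X) (Sum.inl x) = noodlePt x 0 :=
  Quotient.sound (s := noodleSetoid X) rfl

theorem noodlePt_inj {x y : X} {r s : I} : noodlePt x r = noodlePt y s ↔ x = y ∧ r = s :=
  (Quotient.eq (r := noodleSetoid X)).trans Prod.mk_inj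

theorem noodlePt_mem_image_zero {A : Set X} {x : X} {r : I} :
    noodlePt x r ∈ (fun y : X => noodlePt y 0) '' A ↔ x ∈ A ∧ r = 0 := by
  simp [noodlePt_inj, eq_comm]

variable [TopologicalSpace X]

theorem isClosed_iff {C : Set (Noodles X)} :
    IsClosed C ↔
      IsClosed {x : X | noodlePt x 0 ∈ C} ∧ ∀ x : X, IsClosed {r : I | noodlePt x r ∈ C} := by
  let discreteProd : TopologicalSpace (X × I) := @instTopologicalSpaceProd X I ⊥ _
  let mk : X ⊕ (X × I) → Noodles X := Quotient.mk (noodleSetoid X)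
  have mk_comp_inl : mk ∘ Sum.inl = fun x => noodlePt x 0 := funext mk_inl
  calc
    IsClosed C ↔ IsClosed[noodleSumTop X] (mk ⁻¹' C) := isClosed_coinduced
    _ ↔ IsClosed ((mk ∘ Sum.inl) ⁻¹' C) ∧ IsClosed[discreteProd] ((mk ∘ Sum.inr) ⁻¹' C) :=
      @isClosed_sum_iff X (X × I) _ discreteProd _
    _ ↔ IsClosed {x : X | noodlePt x 0 ∈ C} ∧ ∀ x : X, IsClosed {r : I | noodlePt x r ∈ C} :=
      and_congr (by rw [mk_comp_inl]; rfl)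
        (@isClosed_prod_iff_of_discrete_left X I ⊥ _ (discreteTopology_bot X) _)

theorem continuous_noodlePt_zero : Continuous (fun x : X => noodlePt x 0) :=
  continuous_iff_isClosed.2 fun _ hC => (isClosed_iff.1 hC).1

theorem isClosedMap_noodlePt_zero : IsClosedMap (fun x : X => noodlePt x 0) := by
  intro A hA
  simp only [isClosed_iff, noodlePt_mem_image_zero, and_true, Set.ofPred_mem_eq]
  exact ⟨hA, fun x => (Set.subsingleton_singleton.anti fun r hr => hr.2).isClosed⟩

end Noodles

/-- The map `x ↦ 0_x` is a closed embedding of `X` into its Alexandroff Noodles: it is a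
homeomorphism of `X` onto the subspace `{0_x : x ∈ X}`, which is closed in `XI`. -/
theorem noodles_closedEmbedding (X : Type*) [TopologicalSpace X] :
    Topology.IsClosedEmbedding (fun x : X => noodlePt x 0) :=
  .of_continuous_injective_isClosedMap Noodles.continuous_noodlePt_zero
    (fun _ _ h => (Noodles.noodlePt_inj.1 h).1) Noodles.isClosedMap_noodlePt_zero
end

section
/- Let X be a topological space that is locally unique at every point. Then the topology of Hom_p(X) coincides with the topology of Hom_d(X), and consequently Hom_p(X) is a topological group. -/
open Topology

/-- The topology of `Hom_d(X)`: generated by the subbasis of all sets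
`{h ∈ Hom(X) : h(x) = y}` for `x, y ∈ X`. -/
def homDTop (X : Type*) [TopologicalSpace X] : TopologicalSpace (X ≃ₜ X) :=
  TopologicalSpace.generateFrom {S | ∃ x y : X, S = {h : X ≃ₜ X | h x = y}}

/-- `X` is locally unique at `x` if some open neighborhood `O` of `x` contains no point of
`O \ {x}` to which `x` is equivalent (i.e. no self-homeomorphism of `X` maps `x` into
`O \ {x}`). -/
def LocallyUniqueAt (X : Type*) [TopologicalSpace X] (x : X) : Prop :=
  ∃ O : Set X, IsOpen O ∧ x ∈ O ∧ ∀ y ∈ O \ {x}, ∀ f : X ≃ₜ X, f x ≠ y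

/-!
If `x` is alone in its orbit inside an open set `O`, then the homeomorphisms `f` with `f x ∈ f₀(O)`
are exactly those with `f x = f₀ x`, since `f₀⁻¹ ∘ f` sends `x` into `O`, hence to itself. So the
subbasic sets of `Hom_d(X)` are already pointwise open. In `Hom_d(X)`, whether `(f ∘ g) x = y`
depends only on the values of `g` at `x` and of `f` at `g x`, and `f⁻¹ x = y` means `f y = x`, so
the group operations are continuous.
-/

section

variable {X : Type*} [TopologicalSpace X]

theorem isOpen_homPTop_setOf_apply_mem (x : X) {U : Set X} (hU : IsOpen U) :
    IsOpen[homPTop X] {f : X ≃ₜ X | f x ∈ U} :=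
  isOpen_induced (hU.preimage (continuous_apply x))

theorem isOpen_homDTop_setOf_apply_eq (x y : X) : IsOpen[homDTop X] {f : X ≃ₜ X | f x = y} :=
  TopologicalSpace.isOpen_generateFrom_of_mem ⟨x, y, rfl⟩

theorem isOpen_homDTop_setOf_apply_mem (x : X) (s : Set X) :
    IsOpen[homDTop X] {f : X ≃ₜ X | f x ∈ s} := by
  let _ := homDTop X
  have union_fibers : {f : X ≃ₜ X | f x ∈ s} = ⋃ y ∈ s, {f : X ≃ₜ X | f x = y} := by
    ext f
    simp
  rw [union_fibers]
  exact isOpen_biUnion fun y _ => isOpen_homDTop_setOf_apply_eq x y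

theorem homDTop_le_homPTop : homDTop X ≤ homPTop X := by
  let _ := homDTop X
  exact continuous_iff_le_induced.1 <| continuous_pi fun x =>
    continuous_def.2 fun U _ => isOpen_homDTop_setOf_apply_mem x U

theorem LocallyUniqueAt.isOpen_homPTop_setOf_apply_eq {x : X} (hx : LocallyUniqueAt X x) (y : X) :
    IsOpen[homPTop X] {f : X ≃ₜ X | f x = y} := by
  let _ := homPTop X
  obtain ⟨O, hO, hxO, hunique⟩ := hx
  refine isOpen_iff_forall_mem_open.2 fun f₀ hf₀ =>
    ⟨{f | f x ∈ f₀.symm ⁻¹' O}, fun f hf => ?_,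
      isOpen_homPTop_setOf_apply_mem x (hO.preimage f₀.symm.continuous), by simpa using hxO⟩
  have fixes_x : f₀.symm (f x) = x := by
    by_contra hne
    exact hunique _ ⟨hf, hne⟩ (f.trans f₀.symm) rfl
  calc
    f x = f₀ x := f₀.symm_apply_eq.1 fixes_x
    _ = y := hf₀

theorem homPTop_le_homDTop (h : ∀ x : X, LocallyUniqueAt X x) : homPTop X ≤ homDTop X := by
  refine le_generateFrom ?_
  rintro _ ⟨x, y, rfl⟩
  exact (h x).isOpen_homPTop_setOf_apply_eq y

theorem continuous_homDTop_trans :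
    Continuous[@instTopologicalSpaceProd _ _ (homDTop X) (homDTop X), homDTop X]
      (fun p : (X ≃ₜ X) × (X ≃ₜ X) => p.2.trans p.1) := by
  let _ := homDTop X
  refine continuous_generateFrom_iff.2 ?_
  rintro _ ⟨x, y, rfl⟩
  have preimage_eq : (fun p : (X ≃ₜ X) × (X ≃ₜ X) => p.2.trans p.1) ⁻¹' {f | f x = y} =
      ⋃ z, {f : X ≃ₜ X | f z = y} ×ˢ {g : X ≃ₜ X | g x = z} := by
    ext p
    simp
  rw [preimage_eq]
  exact isOpen_iUnion fun z =>
    (isOpen_homDTop_setOf_apply_eq z y).prod (isOpen_homDTop_setOf_apply_eq x z)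

theorem continuous_homDTop_symm :
    Continuous[homDTop X, homDTop X] (fun f : X ≃ₜ X => f.symm) := by
  let _ := homDTop X
  refine continuous_generateFrom_iff.2 ?_
  rintro _ ⟨x, y, rfl⟩
  have preimage_eq : (fun f : X ≃ₜ X => f.symm) ⁻¹' {f | f x = y} = {f | f y = x} := by
    ext f
    exact f.symm_apply_eq.trans eq_comm
  rw [preimage_eq]
  exact isOpen_homDTop_setOf_apply_eq y x

end

/-- If `X` is locally unique at every point, then the topology of `Hom_p(X)` coincides with
that of `Hom_d(X)`, and consequently `Hom_p(X)` is a topological group. -/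
theorem homP_eq_homD_of_locallyUnique (X : Type*) [TopologicalSpace X]
    (h : ∀ x : X, LocallyUniqueAt X x) :
    homPTop X = homDTop X ∧
    (Continuous[@instTopologicalSpaceProd _ _ (homPTop X) (homPTop X), homPTop X]
        (fun p : (X ≃ₜ X) × (X ≃ₜ X) => p.2.trans p.1) ∧
     Continuous[homPTop X, homPTop X] (fun f : X ≃ₜ X => f.symm)) := by
  have topologies_eq : homPTop X = homDTop X :=
    le_antisymm (homPTop_le_homDTop h) homDTop_le_homPTop
  refine ⟨topologies_eq, ?_⟩
  rw [topologies_eq]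
  exact ⟨continuous_homDTop_trans, continuous_homDTop_symm⟩
end

section
/- Hom_p(ℝℝ') is a topological group, where ℝℝ' denotes the Alexandroff double of the real line ℝ. -/
open Topology

/-- The topology of the Alexandroff double `XX'` of `X`: on the underlying set `X ⊕ X`,
the topology generated by all singletons `{x'}` for `x ∈ X` together with all sets
`(U ∪ U') \ F'` for `U` open in `X` and `F'` a finite set of points of the second summand. -/
def alexandroffDoubleTop (X : Type*) [TopologicalSpace X] :
    TopologicalSpace (X ⊕ X) :=
  TopologicalSpace.generateFrom
    ({S | ∃ x : X, S = {Sum.inr x}} ∪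
     {S | ∃ (U : Set X) (F : Set (X ⊕ X)), IsOpen U ∧ F.Finite ∧ F ⊆ Set.range Sum.inr ∧
        S = ((Sum.inl '' U) ∪ (Sum.inr '' U)) \ F})

/-!
In a space `X` without isolated points, the isolated points of `XX'` are exactly the points `x'`,
so every self-homeomorphism of `XX'` restricts to a self-homeomorphism of the first copy of `X`, and
this restriction is a continuous homomorphism from `Hom_p(XX')` to `Hom_p(X)`. Thus the continuity
of the group operations at the points `x` is inherited from `Hom_p(X)`, while evaluation at an
isolated point `x'` is locally constant.

It remains to see that `Hom_p(ℝ)` is a topological group. By the intermediate value theorem a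
self-homeomorphism of `ℝ` preserves betweenness, so it is controlled near a point by its values at
two nearby points on either side.
-/

section HomP

local instance {X : Type*} [TopologicalSpace X] : TopologicalSpace (X ≃ₜ X) := homPTop X

section PointwiseConvergence

variable {X Z : Type*} [TopologicalSpace X] [TopologicalSpace Z]

theorem continuous_homP_iff {φ : Z → (X ≃ₜ X)} :
    Continuous φ ↔ ∀ x, Continuous fun z => φ z x :=
  continuous_induced_rng.trans continuous_pi_iff

theorem continuous_homP_apply_s14 (x : X) : Continuous fun h : X ≃ₜ X => h x :=
  continuous_homP_iff.1 continuous_id x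

theorem isTopGroupHomP_iff :
    IsTopGroupHomP X ↔ (∀ x, Continuous fun q : (X ≃ₜ X) × (X ≃ₜ X) => q.1 (q.2 x)) ∧
      ∀ x, Continuous fun h : X ≃ₜ X => h.symm x :=
  and_congr continuous_homP_iff continuous_homP_iff

theorem eventually_homP_apply_eq {x : X} (hx : IsOpen {x}) (h₀ : X ≃ₜ X) :
    ∀ᶠ h in 𝓝 h₀, h x = h₀ x := by
  have isOpen_image : IsOpen {h₀ x} := by simpa using h₀.isOpenMap _ hx
  exact (continuous_homP_apply_s14 x).continuousAt.eventually_mem (isOpen_image.mem_nhds rfl)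

theorem continuous_homP_comp_apply_of_isOpen_singleton {x : X} (hx : IsOpen {x}) :
    Continuous fun q : (X ≃ₜ X) × (X ≃ₜ X) => q.1 (q.2 x) := by
  refine continuous_iff_continuousAt.2 fun ⟨g₀, h₀⟩ => ?_
  have continuous_at_image : Continuous fun q : (X ≃ₜ X) × (X ≃ₜ X) => q.1 (h₀ x) :=
    (continuous_homP_apply_s14 (h₀ x)).comp continuous_fst
  refine continuous_at_image.continuousAt.congr ?_
  filter_upwards [continuous_snd.continuousAt.eventually (eventually_homP_apply_eq hx h₀)]
    with q hq
  rw [hq]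

theorem continuous_homP_symm_apply_of_isOpen_singleton {x : X} (hx : IsOpen {x}) :
    Continuous fun h : X ≃ₜ X => h.symm x := by
  refine continuous_iff_continuousAt.2 fun h₀ => ?_
  have isOpen_preimage : IsOpen {h₀.symm x} := by simpa using h₀.symm.isOpenMap _ hx
  refine continuousAt_const.congr (f := fun _ => h₀.symm x) ?_
  filter_upwards [eventually_homP_apply_eq isOpen_preimage h₀] with h hh
  rw [h.eq_symm_apply, hh, h₀.apply_symm_apply]

end PointwiseConvergence

section LinearOrder

variable {X : Type*} [ConditionallyCompleteLinearOrder X] [DenselyOrdered X] [TopologicalSpace X]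
  [OrderTopology X]

theorem homeomorph_apply_mem_uIcc {Y : Type*} [LinearOrder Y] [TopologicalSpace Y]
    [OrderClosedTopology Y] (h : Y ≃ₜ X) {a b x : Y} (hx : x ∈ Set.uIcc a b) :
    h x ∈ Set.uIcc (h a) (h b) := by
  have uIcc_subset_image :=
    intermediate_value_uIcc (a := h a) (b := h b) h.symm.continuous.continuousOn
  rw [h.symm_apply_apply, h.symm_apply_apply] at uIcc_subset_image
  obtain ⟨y, hy, rfl⟩ := uIcc_subset_image hx
  rwa [h.apply_symm_apply]

theorem eventually_homP_eval_mem {h₀ : X ≃ₜ X} {x₀ : X} {U : Set X} (hU : IsOpen U)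
    (hUc : U.OrdConnected) (hx₀ : h₀ x₀ ∈ U) :
    ∀ᶠ q : (X ≃ₜ X) × X in 𝓝 (h₀, x₀), q.1 q.2 ∈ U := by
  obtain ⟨a, b, hx₀ab, hab, habU⟩ :=
    exists_Icc_mem_subset_of_mem_nhds ((hU.preimage h₀.continuous).mem_nhds hx₀)
  have hle : a ≤ b := hx₀ab.1.trans hx₀ab.2
  have eventually_apply_mem ⦃c : X⦄ (hc : c ∈ Set.Icc a b) :
      ∀ᶠ q : (X ≃ₜ X) × X in 𝓝 (h₀, x₀), q.1 c ∈ U :=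
    ((continuous_homP_apply_s14 c).comp continuous_fst).continuousAt.eventually_mem
      (hU.mem_nhds (habU hc))
  filter_upwards [eventually_apply_mem (Set.left_mem_Icc.2 hle),
    eventually_apply_mem (Set.right_mem_Icc.2 hle),
    continuous_snd.continuousAt.eventually_mem hab] with q ha hb hq
  exact hUc.uIcc_subset ha hb (homeomorph_apply_mem_uIcc q.1 (Set.Icc_subset_uIcc hq))

theorem continuous_homP_eval : Continuous fun q : (X ≃ₜ X) × X => q.1 q.2 :=
  continuous_iff_continuousAt.2 fun _ => tendsto_order.2
    ⟨fun _ ha => eventually_homP_eval_mem isOpen_Ioi Set.ordConnected_Ioi ha,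
      fun _ ha => eventually_homP_eval_mem isOpen_Iio Set.ordConnected_Iio ha⟩

theorem eventually_notMem_uIcc_homP_symm_apply (h₀ : X ≃ₜ X) {a y : X} (ha : a ≠ h₀.symm y) :
    ∀ᶠ h : X ≃ₜ X in 𝓝 h₀, a ∉ Set.uIcc (h.symm y) (h₀.symm y) := by
  -- Betweenness is a closed condition on `h`, and at `h₀` the interval collapses to `{y}`.
  have isClosed_between : IsClosed {h : X ≃ₜ X | h a ∈ Set.uIcc y (h (h₀.symm y))} :=
    (isClosed_le (continuous_const.min (continuous_homP_apply_s14 _)) (continuous_homP_apply_s14 a)).inter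
      (isClosed_le (continuous_homP_apply_s14 a) (continuous_const.max (continuous_homP_apply_s14 _)))
  have not_between : h₀ a ∉ Set.uIcc y (h₀ (h₀.symm y)) := by
    rwa [h₀.apply_symm_apply, Set.uIcc_self, Set.mem_singleton_iff, ← h₀.eq_symm_apply]
  filter_upwards [isClosed_between.isOpen_compl.mem_nhds not_between] with h hh hah
  refine hh ?_
  simpa using homeomorph_apply_mem_uIcc h hah

theorem continuous_homP_symm_apply (y : X) : Continuous fun h : X ≃ₜ X => h.symm y := by
  refine continuous_iff_continuousAt.2 fun h₀ => tendsto_order.2 ⟨fun a ha => ?_, fun a ha => ?_⟩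
  · filter_upwards [eventually_notMem_uIcc_homP_symm_apply h₀ ha.ne] with h hh
    exact lt_of_not_ge fun hle => hh (Set.mem_uIcc_of_le hle ha.le)
  · filter_upwards [eventually_notMem_uIcc_homP_symm_apply h₀ ha.ne'] with h hh
    exact lt_of_not_ge fun hle => hh (Set.mem_uIcc_of_ge ha.le hle)

variable (X) in
theorem isTopGroupHomP_of_orderTopology : IsTopGroupHomP X :=
  isTopGroupHomP_iff.2
    ⟨fun x => continuous_homP_eval.comp
      (continuous_fst.prodMk ((continuous_homP_apply_s14 x).comp continuous_snd)),
      continuous_homP_symm_apply⟩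

end LinearOrder

/-- The Alexandroff double `XX'`, as a type synonym of `X ⊕ X` so that `alexandroffDoubleTop X`
does not compete with the disjoint union topology. -/
def AlexandroffDouble (X : Type*) : Type _ := X ⊕ X

namespace AlexandroffDouble

variable {X : Type*}

/-- The point `x` of the first summand of `XX'`. -/
def inl (x : X) : AlexandroffDouble X := Sum.inl x

/-- The point `x'` of the second summand of `XX'`. -/
def inr (x : X) : AlexandroffDouble X := Sum.inr x

/-- The retraction of `XX'` onto `X` that sends both `x` and `x'` to `x`. -/
def proj (z : AlexandroffDouble X) : X := Sum.elim id id z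

theorem proj_inl (x : X) : proj (inl x) = x := rfl

theorem inl_injective : Function.Injective (inl : X → AlexandroffDouble X) := Sum.inl_injective

theorem eq_inl_or_eq_inr (z : AlexandroffDouble X) : (∃ x, z = inl x) ∨ ∃ x, z = inr x :=
  match z with
  | Sum.inl x => Or.inl ⟨x, rfl⟩
  | Sum.inr x => Or.inr ⟨x, rfl⟩

variable [TopologicalSpace X]

instance : TopologicalSpace (AlexandroffDouble X) := alexandroffDoubleTop X

theorem isOpen_singleton_inr (x : X) : IsOpen {inr x} :=
  TopologicalSpace.isOpen_generateFrom_of_mem (Or.inl ⟨x, rfl⟩)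

theorem continuous_proj : Continuous (proj : AlexandroffDouble X → X) := by
  refine ⟨fun U hU => TopologicalSpace.isOpen_generateFrom_of_mem
    (Or.inr ⟨U, ∅, hU, Set.finite_empty, Set.empty_subset _, ?_⟩)⟩
  change Sum.elim id id ⁻¹' U = (Sum.inl '' U ∪ Sum.inr '' U) \ ∅
  ext (x | x) <;> simp

theorem continuous_inl : Continuous (inl : X → AlexandroffDouble X) := by
  refine continuous_generateFrom_iff.2 ?_
  rintro _ (⟨x, rfl⟩ | ⟨U, F, hU, -, hF, rfl⟩)
  · have preimage_eq_empty : Sum.inl ⁻¹' {(Sum.inr x : X ⊕ X)} = ∅ := by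
      ext
      simp
    exact preimage_eq_empty.symm ▸ isOpen_empty
  · have inl_notMem (y : X) : Sum.inl y ∉ F := fun hy => by simpa using hF hy
    have preimage_eq : Sum.inl ⁻¹' ((Sum.inl '' U ∪ Sum.inr '' U) \ F) = U := by
      ext
      simp [inl_notMem]
    exact preimage_eq.symm ▸ hU

theorem not_isOpen_singleton_inl (x : X) [(𝓝[≠] x).NeBot] : ¬ IsOpen {inl x} := fun hx =>
  not_isOpen_singleton x <| by
    simpa [← Set.image_singleton, inl_injective.preimage_image] using hx.preimage continuous_inl

variable [∀ x : X, (𝓝[≠] x).NeBot]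

theorem inl_proj_apply_inl (h : AlexandroffDouble X ≃ₜ AlexandroffDouble X) (x : X) :
    inl (proj (h (inl x))) = h (inl x) := by
  rcases (h (inl x)).eq_inl_or_eq_inr with ⟨y, hy⟩ | ⟨y, hy⟩
  · rw [hy, proj_inl]
  · have isOpen_preimage : IsOpen (h.symm '' {h (inl x)}) :=
      h.symm.isOpenMap _ (hy ▸ isOpen_singleton_inr y)
    rw [Set.image_singleton, h.symm_apply_apply] at isOpen_preimage
    exact (not_isOpen_singleton_inl x isOpen_preimage).elim

/-- The restriction of a self-homeomorphism of `XX'` to the first summand, which it preserves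
when `X` has no isolated points. -/
def restrict (h : AlexandroffDouble X ≃ₜ AlexandroffDouble X) : X ≃ₜ X where
  toFun x := proj (h (inl x))
  invFun x := proj (h.symm (inl x))
  left_inv x := by simp only [inl_proj_apply_inl, h.symm_apply_apply, proj_inl]
  right_inv x := by simp only [inl_proj_apply_inl, h.apply_symm_apply, proj_inl]
  continuous_toFun := continuous_proj.comp (h.continuous.comp continuous_inl)
  continuous_invFun := continuous_proj.comp (h.symm.continuous.comp continuous_inl)

theorem apply_inl (h : AlexandroffDouble X ≃ₜ AlexandroffDouble X) (x : X) :
    h (inl x) = inl (restrict h x) :=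
  (inl_proj_apply_inl h x).symm

theorem symm_apply_inl (h : AlexandroffDouble X ≃ₜ AlexandroffDouble X) (x : X) :
    h.symm (inl x) = inl ((restrict h).symm x) :=
  (inl_proj_apply_inl h.symm x).symm

theorem continuous_restrict :
    Continuous (restrict : (AlexandroffDouble X ≃ₜ AlexandroffDouble X) → (X ≃ₜ X)) :=
  continuous_homP_iff.2 fun x => continuous_proj.comp (continuous_homP_apply_s14 (inl x))

theorem isTopGroupHomP (hX : IsTopGroupHomP X) : IsTopGroupHomP (AlexandroffDouble X) := by
  obtain ⟨continuous_comp_apply, continuous_symm_apply⟩ := isTopGroupHomP_iff.1 hX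
  refine isTopGroupHomP_iff.2 ⟨fun z => ?_, fun z => ?_⟩
  · rcases z.eq_inl_or_eq_inr with ⟨x, rfl⟩ | ⟨x, rfl⟩
    · simp only [apply_inl]
      exact continuous_inl.comp <| (continuous_comp_apply x).comp <|
        continuous_restrict.prodMap continuous_restrict
    · exact continuous_homP_comp_apply_of_isOpen_singleton (isOpen_singleton_inr x)
  · rcases z.eq_inl_or_eq_inr with ⟨x, rfl⟩ | ⟨x, rfl⟩
    · simp only [symm_apply_inl]
      exact continuous_inl.comp <| (continuous_symm_apply x).comp continuous_restrict
    · exact continuous_homP_symm_apply_of_isOpen_singleton (isOpen_singleton_inr x)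

end AlexandroffDouble

end HomP

theorem alexandroffDouble_real_homP_topologicalGroup_general (X : Type*)
    [ConditionallyCompleteLinearOrder X] [DenselyOrdered X] [Nontrivial X] [TopologicalSpace X]
    [OrderTopology X] : @IsTopGroupHomP (X ⊕ X) (alexandroffDoubleTop X) :=
  AlexandroffDouble.isTopGroupHomP (isTopGroupHomP_of_orderTopology X)

/-- `Hom_p(ℝℝ')` is a topological group, where `ℝℝ'` is the Alexandroff double of the
real line. -/
theorem alexandroffDouble_real_homP_topologicalGroup :
    @IsTopGroupHomP (ℝ ⊕ ℝ) (alexandroffDoubleTop ℝ) := by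
  exact alexandroffDouble_real_homP_topologicalGroup_general ℝ
end

section
/- For every positive integer n, the plane ℝ² (with its usual Euclidean topology) is strongly n-homogeneous: for any two subsets A, B ⊆ ℝ² with |A| = |B| = n and any bijection h : A → B there exists a self-homeomorphism f of ℝ² whose restriction to A equals h. -/
/-!
Two finite injective families `a`, `b` of points of the plane over an infinite field are matched by
four shears. Shearing `a` horizontally by a generic scalar makes its first coordinates `v i`
pairwise distinct; shearing `b` vertically by a generic scalar makes its second coordinates `w i`
pairwise distinct. Since the nodes are distinct, a vertical shear along an interpolating polynomial
moves the points `(v i, _)` to `(v i, w i)`, and a horizontal one moves these to `((b i).1, w i)`,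
the sheared family `b`.
-/

section Shear

variable {X G : Type*} [TopologicalSpace X] [TopologicalSpace G] [AddGroup G]
  [IsTopologicalAddGroup G]

/-- The vertical shear `(x, y) ↦ (x, y + f x)` along a continuous function `f`, as a
self-homeomorphism of the product. -/
def verticalShear (f : C(X, G)) : X × G ≃ₜ X × G where
  toEquiv := .prodShear (.refl X) fun x ↦ .addRight (f x)
  continuous_toFun := by
    change Continuous fun z : X × G ↦ (z.1, z.2 + f z.1)
    fun_prop
  continuous_invFun := by
    change Continuous fun z : X × G ↦ (z.1, z.2 + -f z.1)
    fun_prop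

/-- The horizontal shear `(y, x) ↦ (y + f x, x)` along a continuous function `f`, obtained from
the vertical one by exchanging the coordinates. -/
def horizontalShear (f : C(X, G)) : G × X ≃ₜ G × X :=
  (Homeomorph.prodComm G X).trans ((verticalShear f).trans (Homeomorph.prodComm X G))

@[simp]
lemma verticalShear_apply (f : C(X, G)) (z : X × G) :
    verticalShear f z = (z.1, z.2 + f z.1) := rfl

@[simp]
lemma horizontalShear_apply (f : C(X, G)) (z : G × X) :
    horizontalShear f z = (z.1 + f z.2, z.2) := rfl

end Shear

section GenericShear

variable {ι R M : Type*} [Ring R] [IsDomain R] [AddCommGroup M] [Module R M]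
  [Module.IsTorsionFree R M]

lemma subsingleton_setOf_fst_add_smul_snd_eq {p q : M × M} (hpq : p ≠ q) :
    {c : R | p.1 + c • p.2 = q.1 + c • q.2}.Subsingleton := by
  intro c hc d hd
  by_contra hcd
  have hsmul : (c - d) • (p.2 - q.2) = 0 := by
    calc (c - d) • (p.2 - q.2)
        = (p.1 + c • p.2) - (q.1 + c • q.2) - ((p.1 + d • p.2) - (q.1 + d • q.2)) := by
          simp only [sub_smul, smul_sub]; abel
      _ = 0 := by rw [hc, hd]; simp
  have hsnd : p.2 = q.2 :=
    sub_eq_zero.mp ((smul_eq_zero.mp hsmul).resolve_left (sub_ne_zero.mpr hcd))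
  have hfst : p.1 = q.1 := by
    rw [Set.mem_ofPred_eq, hsnd] at hc
    exact add_right_cancel hc
  exact hpq (Prod.ext hfst hsnd)

lemma exists_injOn_fst_add_smul_snd [Infinite R] {s : Set ι} (hs : s.Finite) {a : ι → M × M}
    (ha : s.InjOn a) : ∃ c : R, s.InjOn fun i ↦ (a i).1 + c • (a i).2 := by
  have hfinite : (⋃ p ∈ s.offDiag,
      {c : R | (a p.1).1 + c • (a p.1).2 = (a p.2).1 + c • (a p.2).2}).Finite :=
    hs.offDiag.biUnion fun p ⟨hi, hj, hij⟩ ↦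
      (subsingleton_setOf_fst_add_smul_snd_eq (ha.ne hi hj hij)).finite
  obtain ⟨c, hc⟩ := hfinite.exists_notMem
  refine ⟨c, fun i hi j hj hij ↦ ?_⟩
  by_contra hne
  exact hc (Set.mem_biUnion (x := (i, j)) ⟨hi, hj, hne⟩ hij)

end GenericShear

section TopologicalField

variable {ι K : Type*} [Field K] [TopologicalSpace K] [IsTopologicalRing K]

lemma exists_continuousMap_apply_eq {s : Set ι} (hs : s.Finite) {v : ι → K} (hv : s.InjOn v)
    (r : ι → K) : ∃ f : C(K, K), ∀ i ∈ s, f (v i) = r i := by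
  classical
  lift s to Finset ι using hs
  exact ⟨(Lagrange.interpolate s v r).toContinuousMap,
    fun i hi ↦ Lagrange.eval_interpolate_at_node r hv hi⟩

variable [Infinite K]

lemma exists_homeomorph_prod_apply_eq {s : Set ι} (hs : s.Finite) {a b : ι → K × K}
    (ha : s.InjOn a) (hb : s.InjOn b) : ∃ F : K × K ≃ₜ K × K, ∀ i ∈ s, F (a i) = b i := by
  obtain ⟨c, hv⟩ := exists_injOn_fst_add_smul_snd (R := K) hs ha
  obtain ⟨d, hw⟩ := exists_injOn_fst_add_smul_snd (R := K) hs
    (Prod.swap_injective.comp_injOn hb)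
  let v : ι → K := fun i ↦ (a i).1 + c • (a i).2
  let w : ι → K := fun i ↦ (b i).2 + d • (b i).1
  obtain ⟨f, hf⟩ := exists_continuousMap_apply_eq hs (v := v) hv fun i ↦ w i - (a i).2
  obtain ⟨g, hg⟩ := exists_continuousMap_apply_eq hs (v := w) hw fun i ↦ (b i).1 - v i
  let shearA : K × K ≃ₜ K × K := horizontalShear (c • ContinuousMap.id K)
  let shearB : K × K ≃ₜ K × K := verticalShear (d • ContinuousMap.id K)
  refine ⟨shearA.trans ((verticalShear f).trans ((horizontalShear g).trans shearB.symm)),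
    fun i hi ↦ ?_⟩
  have hshearA : shearA (a i) = (v i, (a i).2) := rfl
  have hvertical : verticalShear f (v i, (a i).2) = (v i, w i) := by simp [hf i hi]
  have hhorizontal : horizontalShear g (v i, w i) = ((b i).1, w i) := by simp [hg i hi]
  have hshearB : shearB (b i) = ((b i).1, w i) := rfl
  simp only [Homeomorph.trans_apply, hshearA, hvertical, hhorizontal]
  exact shearB.symm_apply_eq.mpr hshearB.symm

variable (K) in
theorem plane_stronglyNHomogeneous_general {n : ℕ} (hn : 0 < n) :
    StronglyNHomogeneous (K × K) n := by
  intro A B hA _ h hAB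
  have hfinite : A.Finite := Set.finite_of_ncard_pos (hA ▸ hn)
  exact exists_homeomorph_prod_apply_eq hfinite (Set.injOn_id A) hAB.injOn

end TopologicalField

/-- For every positive integer `n`, the plane `ℝ²` is strongly `n`-homogeneous. -/
theorem plane_stronglyNHomogeneous : ∀ n : ℕ, 0 < n → StronglyNHomogeneous (ℝ × ℝ) n :=
  fun _ hn ↦ plane_stronglyNHomogeneous_general ℝ hn
end

section
/- Hom_p(ℝ²) is not a topological group: on the group of self-homeomorphisms of the plane ℝ² with the topology of pointwise convergence, it is not the case that composition is jointly continuous and inversion is continuous. -/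
open Topology

/-!
The function `φ (s, t) = s * t / (s ^ 2 + t ^ 2)` is continuous in each variable separately, but
its restriction to the diagonal jumps at the origin. Let `f` be a continuous linear functional with
`f u = 1` and `f v = 0`, where `v ≠ 0`. The shears `x ↦ x + φ (s, f x) • v` and the translations
`x ↦ x + s • u` depend continuously on `s` for pointwise convergence. Composing them at the origin
gives `s • u + φ (s, s) • v`, which is not continuous in `s`, so composition cannot be jointly
continuous.
-/

section PointwiseConvergence

variable {X T : Type*} [TopologicalSpace X] [TopologicalSpace T]

lemma continuous_homPTop_iff {F : T → X ≃ₜ X} :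
    Continuous[_, homPTop X] F ↔ ∀ x, Continuous fun t => F t x :=
  continuous_induced_rng.trans continuous_pi_iff

lemma continuous_apply_apply_of_continuous_trans
    (h_trans : Continuous[@instTopologicalSpaceProd _ _ (homPTop X) (homPTop X), homPTop X]
      (fun p : (X ≃ₜ X) × (X ≃ₜ X) => p.2.trans p.1))
    {F G : T → X ≃ₜ X} (hF : ∀ x, Continuous fun t => F t x)
    (hG : ∀ x, Continuous fun t => G t x) (x : X) :
    Continuous fun t => F t (G t x) := by
  let := homPTop X
  have hFG : Continuous fun t => (F t, G t) :=
    (continuous_homPTop_iff.2 hF).prodMk (continuous_homPTop_iff.2 hG)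
  exact continuous_homPTop_iff.1 (h_trans.comp hFG) x

end PointwiseConvergence

section Shear

variable {R E : Type*} [Ring R] [TopologicalSpace R] [AddCommGroup E] [TopologicalSpace E]
  [IsTopologicalAddGroup E] [Module R E] [ContinuousSMul R E]

/-- The shear `x ↦ x + φ (f x) • v` in a direction `v` of the hyperplane `f = 0`, by an amount that
varies from one translate of the hyperplane to another according to `φ`. -/
def shearHomeomorph (f : E →L[R] R) {v : E} (hv : f v = 0) (φ : C(R, R)) : E ≃ₜ E where
  toFun x := x + φ (f x) • v
  invFun x := x - φ (f x) • v
  left_inv x := by simp [hv]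
  right_inv x := by simp [hv]
  continuous_toFun := by fun_prop
  continuous_invFun := by fun_prop

@[simp]
lemma shearHomeomorph_apply (f : E →L[R] R) {v : E} (hv : f v = 0) (φ : C(R, R)) (x : E) :
    shearHomeomorph f hv φ x = x + φ (f x) • v :=
  rfl

end Shear

section SeparatelyContinuous

/-- The function `s * t / (s ^ 2 + t ^ 2)`, the standard example of a separately continuous
function that is not jointly continuous. Division by zero gives it the value `0` at the origin. -/
noncomputable def mulDivSqAddSq (s t : ℝ) : ℝ :=
  s * t / (s ^ 2 + t ^ 2)

lemma mulDivSqAddSq_comm (s t : ℝ) : mulDivSqAddSq s t = mulDivSqAddSq t s := by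
  simp only [mulDivSqAddSq, mul_comm s t, add_comm (s ^ 2)]

lemma mulDivSqAddSq_zero_left (t : ℝ) : mulDivSqAddSq 0 t = 0 := by
  simp [mulDivSqAddSq]

lemma mulDivSqAddSq_self {t : ℝ} (ht : t ≠ 0) : mulDivSqAddSq t t = 1 / 2 := by
  rw [mulDivSqAddSq]
  field_simp
  norm_num

lemma continuous_mulDivSqAddSq_right (s : ℝ) : Continuous (mulDivSqAddSq s) := by
  obtain rfl | hs := eq_or_ne s 0
  · simpa only [funext mulDivSqAddSq_zero_left] using continuous_const
  · have denom_ne_zero (t : ℝ) : s ^ 2 + t ^ 2 ≠ 0 := by positivity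
    unfold mulDivSqAddSq
    fun_prop (disch := assumption)

lemma continuous_mulDivSqAddSq_left (t : ℝ) : Continuous fun s => mulDivSqAddSq s t := by
  simpa only [mulDivSqAddSq_comm _ t] using continuous_mulDivSqAddSq_right t

lemma not_continuous_mulDivSqAddSq_diag : ¬ Continuous fun t => mulDivSqAddSq t t := by
  intro h
  have h_eq : (fun t => mulDivSqAddSq t t) = fun _ => 1 / 2 :=
    h.ext_on (dense_compl_singleton 0) continuous_const fun _ ht => mulDivSqAddSq_self ht
  have h_zero := congrFun h_eq 0
  norm_num [mulDivSqAddSq_zero_left] at h_zero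

end SeparatelyContinuous

lemma exists_ne_zero_apply_eq_zero_of_one_lt_rank {R M : Type*} [Ring R]
    [StrongRankCondition R] [AddCommGroup M] [Module R M] (h_rank : 1 < Module.rank R M)
    (f : M →ₗ[R] R) : ∃ v ≠ 0, f v = 0 := by
  by_contra! h
  have h_inj : Function.Injective f :=
    (injective_iff_map_eq_zero f).2 fun v hv => by_contra fun hv0 => h v hv0 hv
  have h_le := LinearMap.lift_rank_le_of_injective f h_inj
  rw [Module.rank_self, Cardinal.lift_one, Cardinal.lift_le_one_iff] at h_le
  exact h_rank.not_ge h_le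

theorem plane_homP_not_topologicalGroup_general {E : Type*} [AddCommGroup E] [TopologicalSpace E]
    [IsTopologicalAddGroup E] [Module ℝ E] [ContinuousSMul ℝ E] [SeparatingDual ℝ E]
    (h_rank : 1 < Module.rank ℝ E) :
    ¬ Continuous[@instTopologicalSpaceProd _ _ (homPTop E) (homPTop E), homPTop E]
        (fun p : (E ≃ₜ E) × (E ≃ₜ E) => p.2.trans p.1) := by
  intro h_trans
  have : Nontrivial E := rank_pos_iff_nontrivial.1 (zero_lt_one.trans h_rank)
  obtain ⟨u, hu⟩ := exists_ne (0 : E)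
  obtain ⟨f, hfu⟩ := SeparatingDual.exists_eq_one (R := ℝ) hu
  obtain ⟨v, hv, hfv⟩ := exists_ne_zero_apply_eq_zero_of_one_lt_rank h_rank f.toLinearMap
  obtain ⟨g, hgv⟩ := SeparatingDual.exists_eq_one (R := ℝ) hv
  let shear (s : ℝ) : E ≃ₜ E :=
    shearHomeomorph f hfv ⟨mulDivSqAddSq s, continuous_mulDivSqAddSq_right s⟩
  let translation (s : ℝ) : E ≃ₜ E := Homeomorph.addRight (s • u)
  have continuous_shear (x : E) : Continuous fun s => shear s x :=
    continuous_const.add ((continuous_mulDivSqAddSq_left (f x)).smul continuous_const)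
  have continuous_translation (x : E) : Continuous fun s => translation s x :=
    continuous_const.add (continuous_id.smul continuous_const)
  have continuous_orbit : Continuous fun s => shear s (translation s 0) :=
    continuous_apply_apply_of_continuous_trans h_trans continuous_shear continuous_translation 0
  have diag_eq (s : ℝ) : mulDivSqAddSq s s = g (shear s (translation s 0)) - s * g u := by
    simp [shear, translation, hfu, hgv]
  refine not_continuous_mulDivSqAddSq_diag ?_
  simp only [diag_eq]
  exact (g.continuous.comp continuous_orbit).sub (continuous_id.mul continuous_const)

/-- `Hom_p(ℝ²)` is not a topological group: on the self-homeomorphism group of the plane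
with the topology of pointwise convergence, it is not the case that composition is jointly
continuous and inversion is continuous. -/
theorem plane_homP_not_topologicalGroup :
    ¬ (Continuous[@instTopologicalSpaceProd _ _ (homPTop (ℝ × ℝ)) (homPTop (ℝ × ℝ)),
          homPTop (ℝ × ℝ)]
        (fun p : ((ℝ × ℝ) ≃ₜ (ℝ × ℝ)) × ((ℝ × ℝ) ≃ₜ (ℝ × ℝ)) => p.2.trans p.1) ∧
       Continuous[homPTop (ℝ × ℝ), homPTop (ℝ × ℝ)]
        (fun f : (ℝ × ℝ) ≃ₜ (ℝ × ℝ) => f.symm)) := by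
  have h_rank : 1 < Module.rank ℝ (ℝ × ℝ) := by norm_num [one_add_one_eq_two]
  exact fun h => plane_homP_not_topologicalGroup_general h_rank h.1
end

section
/- For every positive integer n, the space ℚ of rational numbers (with the subspace topology inherited from ℝ) is strongly n-homogeneous: for any two subsets A, B ⊆ ℚ with |A| = |B| = n and any bijection h : A → B there exists a self-homeomorphism f of ℚ whose restriction to A equals h. -/
/-!
In a homogeneous zero-dimensional T₀ space, let `φ` be a self-homeomorphism with `φ a = b ≠ a`.
A sufficiently small clopen neighbourhood `U` of `a` is disjoint from `φ '' U`, and both avoid any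
prescribed finite set not containing `a` and `b`. Exchanging `U` and `φ '' U` along `φ` and fixing
all other points is then a homeomorphism that moves `a` to `b` and fixes the finite set. Composing
such homeomorphisms corrects the images of finitely many points one at a time.
-/

open Set TopologicalSpace

section ExchangeImage

variable {X : Type*} {φ : X ≃ X} {U : Set X} {x : X}

open Classical in
/-- The map exchanging `U` and `φ '' U` along `φ` and fixing all other points. It is meant for `U`
disjoint from `φ '' U`; on the intersection `φ` takes precedence over `φ.symm`. -/
noncomputable def exchangeImage (φ : X ≃ X) (U : Set X) : X → X :=
  U.piecewise φ ((φ '' U).piecewise φ.symm id)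

theorem exchangeImage_of_mem (hx : x ∈ U) : exchangeImage φ U x = φ x := by
  simp only [exchangeImage, piecewise_eq_of_mem, hx]

theorem exchangeImage_of_mem_image (hU : Disjoint U (φ '' U)) (hx : x ∈ φ '' U) :
    exchangeImage φ U x = φ.symm x := by
  have hxU : x ∉ U := hU.notMem_of_mem_right hx
  simp only [exchangeImage, piecewise_eq_of_notMem, hxU, not_false_eq_true, piecewise_eq_of_mem, hx]

theorem exchangeImage_of_notMem (hx : x ∉ U) (hφx : x ∉ φ '' U) : exchangeImage φ U x = x := by
  simp only [exchangeImage, piecewise_eq_of_notMem, hx, hφx, not_false_eq_true, id]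

theorem exchangeImage_involutive (hU : Disjoint U (φ '' U)) :
    Function.Involutive (exchangeImage φ U) := by
  intro x
  by_cases hx : x ∈ U
  · rw [exchangeImage_of_mem hx, exchangeImage_of_mem_image hU (mem_image_of_mem φ hx),
      φ.symm_apply_apply]
  by_cases hφx : x ∈ φ '' U
  · have hx' : φ.symm x ∈ U := φ.symm_image_image U ▸ mem_image_of_mem φ.symm hφx
    rw [exchangeImage_of_mem_image hU hφx, exchangeImage_of_mem hx', φ.apply_symm_apply]
  · rw [exchangeImage_of_notMem hx hφx, exchangeImage_of_notMem hx hφx]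

end ExchangeImage

variable {X : Type*} [TopologicalSpace X]

theorem continuous_exchangeImage (φ : X ≃ₜ X) {U : Set X} (hU : IsClopen U) :
    Continuous (exchangeImage φ.toEquiv U) := by
  classical
  have hφU : IsClopen (φ '' U) := ⟨φ.isClosed_image.2 hU.isClosed, φ.isOpen_image.2 hU.isOpen⟩
  refine φ.continuous.piecewise ?_ (φ.symm.continuous.piecewise ?_ continuous_id)
  · simp [hU.frontier_eq]
  · simp [hφU.frontier_eq]

/-- `exchangeImage` as a self-homeomorphism, for a clopen set disjoint from its image. -/
noncomputable def exchangeClopen (φ : X ≃ₜ X) {U : Set X} (hU : IsClopen U)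
    (hdisj : Disjoint U (φ '' U)) : X ≃ₜ X where
  toEquiv := (exchangeImage_involutive (φ := φ.toEquiv) hdisj).toPerm
  continuous_toFun := continuous_exchangeImage φ hU
  continuous_invFun := continuous_exchangeImage φ hU

theorem exists_isClopen_disjoint_image [T0Space X]
    (hX : IsTopologicalBasis {s : Set X | IsClopen s}) (φ : X ≃ₜ X) {a : X} (hφa : φ a ≠ a)
    {F : Set X} (hF : F.Finite) (ha : a ∉ F) (hφaF : φ a ∉ F) :
    ∃ U, IsClopen U ∧ a ∈ U ∧ Disjoint U (φ '' U) ∧ Disjoint F U ∧ Disjoint F (φ '' U) := by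
  have : TotallySeparatedSpace X := totallySeparatedSpace_of_t0_of_basis_clopen hX
  obtain ⟨V, hV, haV, hφaV⟩ := exists_isClopen_of_totally_separated hφa.symm
  have hFo : IsOpen Fᶜ := hF.isClosed.isOpen_compl
  obtain ⟨U, hU, haU, hUsub⟩ := hX.exists_subset_of_mem_open
    (show a ∈ (V ∩ Fᶜ) ∩ φ ⁻¹' (Vᶜ ∩ Fᶜ) from ⟨⟨haV, ha⟩, hφaV, hφaF⟩)
    ((hV.isOpen.inter hFo).inter ((hV.compl.isOpen.inter hFo).preimage φ.continuous))
  obtain ⟨hUVF, hφU⟩ := subset_inter_iff.1 hUsub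
  have hφUVF : φ '' U ⊆ Vᶜ ∩ Fᶜ := image_subset_iff.2 hφU
  exact ⟨U, hU, haU,
    disjoint_compl_right.mono (hUVF.trans inter_subset_left) (hφUVF.trans inter_subset_left),
    disjoint_compl_right.mono_right (hUVF.trans inter_subset_right),
    disjoint_compl_right.mono_right (hφUVF.trans inter_subset_right)⟩

theorem exists_homeomorph_apply_eq_eqOn_id [T0Space X]
    (hX : IsTopologicalBasis {s : Set X | IsClopen s}) (hhom : ∀ a b : X, ∃ φ : X ≃ₜ X, φ a = b)
    {F : Set X} (hF : F.Finite) {a b : X} (ha : a ∉ F) (hb : b ∉ F) :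
    ∃ g : X ≃ₜ X, g a = b ∧ EqOn g id F := by
  rcases eq_or_ne b a with rfl | hba
  · exact ⟨.refl X, rfl, fun _ _ ↦ rfl⟩
  obtain ⟨φ, rfl⟩ := hhom a b
  obtain ⟨U, hU, haU, hdisj, hFU, hFφU⟩ := exists_isClopen_disjoint_image hX φ hba hF ha hb
  exact ⟨exchangeClopen φ hU hdisj, exchangeImage_of_mem haU, fun x hx ↦
    exchangeImage_of_notMem (hFU.notMem_of_mem_left hx) (hFφU.notMem_of_mem_left hx)⟩

theorem exists_homeomorph_eqOn_of_injOn_s17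
    (hmove : ∀ F : Set X, F.Finite → ∀ a ∉ F, ∀ b ∉ F, ∃ g : X ≃ₜ X, g a = b ∧ EqOn g id F)
    {A : Set X} (hA : A.Finite) {h : X → X} (hh : InjOn h A) :
    ∃ f : X ≃ₜ X, EqOn f h A := by
  induction A, hA using Set.Finite.induction_on with
  | empty => exact ⟨.refl X, eqOn_empty _ _⟩
  | @insert a s has hs ih =>
    obtain ⟨hhs, hha⟩ := (injOn_insert has).1 hh
    obtain ⟨f, hf⟩ := ih hhs
    have hfa : f a ∉ h '' s := by rwa [← hf.image_eq, f.injective.mem_set_image]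
    obtain ⟨g, hga, hg⟩ := hmove (h '' s) (hs.image h) (f a) hfa (h a) hha
    refine ⟨f.trans g, forall_mem_insert.2 ⟨hga, fun x hx ↦ ?_⟩⟩
    calc g (f x) = g (h x) := congrArg g (hf hx)
      _ = h x := hg (mem_image_of_mem h hx)

theorem rat_stronglyNHomogeneous_general [T0Space X]
    (hX : IsTopologicalBasis {s : Set X | IsClopen s}) (hhom : ∀ a b : X, ∃ φ : X ≃ₜ X, φ a = b)
    {n : ℕ} (hn : 0 < n) : StronglyNHomogeneous X n := by
  intro A B hA _ h hh
  have hAfin : A.Finite := finite_of_ncard_pos (hA ▸ hn)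
  exact exists_homeomorph_eqOn_of_injOn_s17
    (fun _ hF _ ha _ hb ↦ exists_homeomorph_apply_eq_eqOn_id hX hhom hF ha hb) hAfin hh.injOn

theorem isTopologicalBasis_isClopen_of_countable [CompletelyRegularSpace X] [Countable X] :
    IsTopologicalBasis {s : Set X | IsClopen s} :=
  CompletelyRegularSpace.isTopologicalBasis_clopens_of_cardinalMk_lt_continuum <|
    (Cardinal.mk_le_aleph0_iff.2 ‹_›).trans_lt Cardinal.aleph0_lt_continuum

theorem exists_homeomorph_apply_eq_of_addGroup {G : Type*} [TopologicalSpace G] [AddGroup G]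
    [SeparatelyContinuousAdd G] (a b : G) : ∃ φ : G ≃ₜ G, φ a = b :=
  ⟨.addRight (-a + b), add_neg_cancel_left a b⟩

/-- For every positive integer `n`, the space `ℚ` of rationals is strongly
`n`-homogeneous. -/
theorem rat_stronglyNHomogeneous : ∀ n : ℕ, 0 < n → StronglyNHomogeneous ℚ n :=
  fun _ ↦ rat_stronglyNHomogeneous_general isTopologicalBasis_isClopen_of_countable
    exists_homeomorph_apply_eq_of_addGroup
end

section
/- Every subspace of an ordinal is locally unique at each of its points: if S is a set of ordinals endowed with the topology inherited from the order topology on the ordinals, then for every x ∈ S there exists an open neighborhood O of x in S such that no self-homeomorphism of S maps x to a point of O \ {x}. -/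
/-!
The least element of a nonempty set of ordinals is isolated in that set, so every set of ordinals is
a scattered space. In a scattered space the orbit of `x` under self-homeomorphisms has an isolated
point, and since self-homeomorphisms permute the orbit transitively, `x` is isolated in it as well:
a neighborhood of `x` that meets the orbit only in `x` witnesses local uniqueness.
-/

open Filter Topology

/-- A topological space is scattered if each of its nonempty subsets has a point that is isolated in
that subset, expressed here as not being an accumulation point of it. It is the property of sets
of ordinals from which local uniqueness follows. -/
def IsScatteredSpace (X : Type*) [TopologicalSpace X] : Prop :=
  ∀ A : Set X, A.Nonempty → ∃ a ∈ A, ¬AccPt a (𝓟 A)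

/-- The orbit of `x` under the group of self-homeomorphisms of `X`, i.e. the set of points to which
`x` is equivalent. -/
def homeomorphOrbit {X : Type*} [TopologicalSpace X] (x : X) : Set X :=
  Set.range fun f : X ≃ₜ X ↦ f x

section Scattered

variable {X Y : Type*} [TopologicalSpace X] [TopologicalSpace Y]

theorem IsScatteredSpace.of_continuous_injective {f : X → Y} (hY : IsScatteredSpace Y)
    (hf : Continuous f) (hinj : Function.Injective f) : IsScatteredSpace X := by
  intro A hA
  obtain ⟨_, ⟨a, haA, rfl⟩, hisolated⟩ := hY (f '' A) (hA.image f)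
  refine ⟨a, haA, fun hacc ↦ hisolated ?_⟩
  simpa only [map_principal] using hacc.map hf.continuousAt hinj

theorem IsScatteredSpace.subtype (hX : IsScatteredSpace X) (S : Set X) : IsScatteredSpace S :=
  hX.of_continuous_injective continuous_subtype_val Subtype.val_injective

end Scattered

section WellOrder

variable {α : Type*} [LinearOrder α] [WellFoundedLT α] [TopologicalSpace α] [OrderTopology α]

theorem nhdsGT_eq_bot_of_wellFoundedLT (a : α) : 𝓝[>] a = ⊥ := by
  rw [nhdsGT_eq_bot_iff, or_iff_not_imp_left, isTop_iff_isMax, not_isMax_iff]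
  rintro ⟨b, hab⟩
  exact (exists_covBy_le_of_lt hab).imp fun _ ↦ And.left

theorem isScatteredSpace_of_wellFoundedLT : IsScatteredSpace α := by
  intro A hA
  obtain ⟨m, hmA, hmin⟩ := wellFounded_lt.has_min A hA
  have hsub : A \ {m} ⊆ Set.Ioi m := fun a ⟨haA, ham⟩ ↦
    lt_of_le_of_ne (not_lt.mp (hmin a haA)) (Ne.symm ham)
  refine ⟨m, hmA, ?_⟩
  rw [accPt_principal_iff_nhdsWithin, not_neBot, ← le_bot_iff]
  exact (nhdsWithin_mono m hsub).trans_eq (nhdsGT_eq_bot_of_wellFoundedLT m)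

end WellOrder

section Orbit

variable {X : Type*} [TopologicalSpace X]

theorem mem_homeomorphOrbit_self (x : X) : x ∈ homeomorphOrbit x :=
  ⟨Homeomorph.refl X, rfl⟩

theorem image_homeomorphOrbit (f : X ≃ₜ X) (x : X) :
    f '' homeomorphOrbit x = homeomorphOrbit x := by
  ext y
  constructor
  · rintro ⟨_, ⟨g, rfl⟩, rfl⟩
    exact ⟨g.trans f, rfl⟩
  · rintro ⟨g, rfl⟩
    exact ⟨f.symm (g x), ⟨g.trans f.symm, rfl⟩, f.apply_symm_apply (g x)⟩

theorem accPt_homeomorphOrbit_apply {x y : X} (h : AccPt y (𝓟 (homeomorphOrbit x)))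
    (f : X ≃ₜ X) : AccPt (f y) (𝓟 (homeomorphOrbit x)) := by
  simpa only [map_principal, image_homeomorphOrbit] using
    h.map f.continuous.continuousAt f.injective

theorem locallyUniqueAt_of_not_accPt_homeomorphOrbit {x : X}
    (hx : ¬AccPt x (𝓟 (homeomorphOrbit x))) : LocallyUniqueAt X x := by
  rw [accPt_iff_frequently, not_frequently, eventually_nhds_iff] at hx
  obtain ⟨O, hO, hOopen, hxO⟩ := hx
  exact ⟨O, hOopen, hxO, fun y hy f hfy ↦ hO y hy.1 ⟨hy.2, f, hfy⟩⟩

end Orbit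

theorem ordinal_subspace_locallyUnique_general {X : Type*} [TopologicalSpace X]
    (hX : IsScatteredSpace X) (x : X) : LocallyUniqueAt X x := by
  obtain ⟨_, ⟨f, rfl⟩, hisolated⟩ := hX (homeomorphOrbit x) ⟨x, mem_homeomorphOrbit_self x⟩
  exact locallyUniqueAt_of_not_accPt_homeomorphOrbit fun hacc ↦
    hisolated (accPt_homeomorphOrbit_apply hacc f)

/-- Every subspace of the ordinals (with the subspace topology inherited from the order
topology) is locally unique at each of its points: no self-homeomorphism of the subspace
maps a point to a nearby distinct point. -/
theorem ordinal_subspace_locallyUnique (S : Set Ordinal) (x : S) :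
    LocallyUniqueAt S x :=
  ordinal_subspace_locallyUnique_general (isScatteredSpace_of_wellFoundedLT.subtype S) x
end
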